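/- arXiv:1108.2354 — 2 statements merged into one kernel-verified Lean document; each statement's English description precedes it below -/
import Mathlib

section
/- Let f : T → T be a continuous map of a tree. Then every subcontinuum A of T is either asymptotically periodic under f (the sequence (f^{pn}(A)) converges in Hausdorff metric for some p ≥ 1) or asymptotically degenerate (diam f^n(A) → 0 as n → ∞), or both. -/
open Set Filter Metric Topology TopologicalSpace

/-- An arc: a subset homeomorphic to `[0,1]`. -/
def IsArc {T : Type*} [TopologicalSpace T] (A : Set T) : Prop :=
  Nonempty (↥(Set.Icc (0:ℝ) 1) ≃ₜ ↥A)

/-- An arc with endpoints `x` and `y`. -/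
def IsArcBetween {T : Type*} [TopologicalSpace T] (A : Set T) (x y : T) : Prop :=
  ∃ e : ↥(Set.Icc (0:ℝ) 1) ≃ₜ ↥A,
    ((e ⟨0, by norm_num⟩ : ↥A) : T) = x ∧ ((e ⟨1, by norm_num⟩ : ↥A) : T) = y

/-- A tree: a continuum which is uniquely arcwise connected and is a point or a
union of finitely many arcs. -/
structure IsTreeSpace (T : Type*) [MetricSpace T] : Prop where
  compact : CompactSpace T
  conn : ConnectedSpace T
  uniqueArc : ∀ x y : T, x ≠ y → ∃! A : Set T, IsArcBetween A x y
  finiteArcs : (∃ x : T, (Set.univ : Set T) = {x}) ∨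
    ∃ s : Finset (Set T), (∀ A ∈ s, IsArc A) ∧ ⋃₀ (s : Set (Set T)) = Set.univ

/-- The unique arc from `x` to `y` in a tree. -/
noncomputable def treeArc {T : Type*} [MetricSpace T] (hT : IsTreeSpace T) (x y : T) :
    Set T := by
  classical exact if h : x = y then {x} else (hT.uniqueArc x y h).choose

/-- `Comp B x` : the connected component of `x` in `B` if `x ∈ B`, else `{x}`. -/
noncomputable def Comp {T : Type*} [TopologicalSpace T] (B : Set T) (x : T) : Set T := by
  classical exact if x ∈ B then connectedComponentIn B x else {x}

/-- `x` is an endpoint of the whole space (valence one). -/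
def IsEnd {T : Type*} [TopologicalSpace T] (x : T) : Prop :=
  IsConnected ({x}ᶜ : Set T)

/-- `x` is a cut-point of the whole space (valence at least two). -/
def IsCut {T : Type*} [TopologicalSpace T] (x : T) : Prop :=
  ¬ IsPreconnected ({x}ᶜ : Set T)

/-- `x` is an endpoint of the subspace `S` (valence one in `S`). -/
def IsEndpointOf {T : Type*} [TopologicalSpace T] (S : Set T) (x : T) : Prop :=
  x ∈ S ∧ IsConnected (S \ {x})

/-- A subcontinuum: a nonempty compact connected subset. -/
def IsSubcontinuum {T : Type*} [TopologicalSpace T] (A : Set T) : Prop :=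
  A.Nonempty ∧ IsCompact A ∧ IsConnected A

/-- Attracting fixed point. -/
def IsAFP {T : Type*} [TopologicalSpace T] (f : T → T) (x : T) : Prop :=
  f x = x ∧ ∀ U : Set T, IsOpen U → x ∈ U →
    ∃ V : Set T, IsOpen V ∧ x ∈ V ∧ V ⊆ U ∧ f '' closure V ⊆ V

/-- `A` is asymptotically periodic under `f`: for some `p ≥ 1` the sequence
`f^{pn}(A)` converges in the Hausdorff metric (to a nonempty compact set). -/
def AsympPeriodic {T : Type*} [MetricSpace T] (f : T → T) (A : Set T) : Prop :=
  ∃ p : ℕ, 1 ≤ p ∧ ∃ L : Set T, L.Nonempty ∧ IsCompact L ∧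
    Tendsto (fun n : ℕ => hausdorffDist (f^[p * n] '' A) L) atTop (𝓝 0)

/-- Kuratowski lower limit of a sequence of sets. -/
def KLiminf {T : Type*} [TopologicalSpace T] (A : ℕ → Set T) : Set T :=
  {x | ∀ U : Set T, IsOpen U → x ∈ U → ∀ᶠ n in atTop, (U ∩ A n).Nonempty}

/-- Kuratowski upper limit of a sequence of sets. -/
def KLimsup {T : Type*} [TopologicalSpace T] (A : ℕ → Set T) : Set T :=
  {x | ∀ U : Set T, IsOpen U → x ∈ U → ∃ᶠ n in atTop, (U ∩ A n).Nonempty}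

/-- Convergence in the hyperspace: the Kuratowski lower and upper limits agree. -/
def KConv {T : Type*} [TopologicalSpace T] (A : ℕ → Set T) : Prop :=
  KLiminf A = KLimsup A

/-- Set-theoretic limit superior of the iterated images of `A`. -/
def Ls {T : Type*} (f : T → T) (A : Set T) : Set T :=
  ⋂ m : ℕ, ⋃ n : ℕ, ⋃ (_ : m ≤ n), f^[n] '' A

/-- The hyperspace of subcontinua of `T`, with the Hausdorff metric. -/
abbrev SubCon (T : Type*) [MetricSpace T] :=
  {A : NonemptyCompacts T // IsConnected (A.1 : Set T)}

/-- The induced map on the hyperspace of subcontinua. -/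
noncomputable def indCon {T : Type*} [MetricSpace T] (f : T → T) (hf : Continuous f) :
    SubCon T → SubCon T :=
  fun A => ⟨⟨⟨f '' (A.1 : Set T), A.1.isCompact.image hf⟩, A.1.nonempty.image f⟩,
    A.2.image f hf.continuousOn⟩

/-- Topological entropy (Bowen–Dinaburg) of `f` on the subset `S`. -/
noncomputable def entropyOn {X : Type*} [MetricSpace X] (f : X → X) (S : Set X) : EReal :=
  Dynamics.coverEntropy f S

/-- Topological entropy of `f`. -/
noncomputable def entropy {X : Type*} [MetricSpace X] (f : X → X) : EReal :=
  Dynamics.coverEntropy f Set.univ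

/-- Maximal cardinality of an `(n,f,ε)`-separated subset of `S`. -/
noncomputable def sepNumOn {X : Type*} [MetricSpace X] (f : X → X) (S : Set X)
    (n : ℕ) (ε : ℝ) : ℕ :=
  sSup {k : ℕ | ∃ E : Finset X, ↑E ⊆ S ∧
    (∀ x ∈ E, ∀ y ∈ E, x ≠ y → ∃ j < n, ε < dist (f^[j] x) (f^[j] y)) ∧ E.card = k}

/-- Minimal cardinality of an `(n,f,ε)`-spanning subset of `S`. -/
noncomputable def spanNumOn {X : Type*} [MetricSpace X] (f : X → X) (S : Set X)
    (n : ℕ) (ε : ℝ) : ℕ :=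
  sInf {k : ℕ | ∃ F : Finset X, ↑F ⊆ S ∧
    (∀ x ∈ S, ∃ y ∈ F, ∀ j < n, dist (f^[j] x) (f^[j] y) ≤ ε) ∧ F.card = k}

noncomputable def sepNum {X : Type*} [MetricSpace X] (f : X → X) (n : ℕ) (ε : ℝ) : ℕ :=
  sepNumOn f Set.univ n ε

noncomputable def spanNum {X : Type*} [MetricSpace X] (f : X → X) (n : ℕ) (ε : ℝ) : ℕ :=
  spanNumOn f Set.univ n ε

/-- The graph of a map. -/
def graphOf {X : Type*} (φ : X → X) : Set (X × X) := {p | p.2 = φ p.1}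

/-- The functional envelope: the closure, in the hyperspace of nonempty compact
subsets of `X × X` with the Hausdorff metric, of the set of graphs of continuous
self-maps of `X`. -/
def FunctionalEnvelope (X : Type*) [MetricSpace X] :
    Set (NonemptyCompacts (X × X)) :=
  closure {G : NonemptyCompacts (X × X) | ∃ φ : X → X, Continuous φ ∧
    (G : Set (X × X)) = graphOf φ}

/-- `F` is the map induced by `f` on the functional envelope:
`F(φ) = f ∘ φ`, i.e. on graphs, `F(G) = (id × f)(G)`. -/
def IsEnvelopeMap {X : Type*} [MetricSpace X] (f : X → X)
    (F : ↥(FunctionalEnvelope X) → ↥(FunctionalEnvelope X)) : Prop :=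
  ∀ G : ↥(FunctionalEnvelope X),
    ((F G : NonemptyCompacts (X × X)) : Set (X × X)) =
      Prod.map id f '' ((G : NonemptyCompacts (X × X)) : Set (X × X))

/-- The setoid on `T` identifying all points of `M` (so that `Quotient` is `T/M`). -/
def collapseSetoid {T : Type*} (M : Set T) : Setoid T where
  r a b := a = b ∨ (a ∈ M ∧ b ∈ M)
  iseqv := by
    refine ⟨fun a => Or.inl rfl, ?_, ?_⟩
    · rintro a b (rfl | ⟨h1, h2⟩)
      exacts [Or.inl rfl, Or.inr ⟨h2, h1⟩]
    · rintro a b c (rfl | ⟨h1, h2⟩) h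
      · exact h
      · rcases h with rfl | ⟨h3, h4⟩
        exacts [Or.inr ⟨h1, h2⟩, Or.inr ⟨h1, h4⟩]

lemma tendsto_add_mul_atTop (r : ℕ) {P : ℕ} (hP : 1 ≤ P) :
    Tendsto (fun n => r + P * n) atTop atTop :=
  tendsto_atTop_mono (fun n => (Nat.le_mul_of_pos_left n hP).trans (Nat.le_add_left _ _))
    tendsto_id

/-- A bounded orbit `x` of the system `x (n + 1) i = max_j φ i j (x n j)` with monotone continuous
`φ i j`. -/
structure IsMaxOrbit {ι : Type*} (φ : ι → ι → ℝ → ℝ) (x : ℕ → ι → ℝ) : Prop where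
  mono : ∀ i j, Monotone (φ i j)
  cont : ∀ i j, Continuous (φ i j)
  le : ∀ n i j, φ i j (x n j) ≤ x (n + 1) i
  att : ∀ n i, ∃ j, x (n + 1) i = φ i j (x n j)
  nonneg : ∀ n i, 0 ≤ x n i
  le_one : ∀ n i, x n i ≤ 1

namespace IsMaxOrbit

variable {ι : Type*} {φ : ι → ι → ℝ → ℝ} {x : ℕ → ι → ℝ}

lemma dominate (h : IsMaxOrbit φ x) {w : ℕ → ι} {u : ℕ → ℝ} {N : ℕ}
    (hu : ∀ t < N, u (t + 1) ≤ φ (w (t + 1)) (w t) (u t)) {s b : ℕ} (hb : u s ≤ x b (w s)) :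
    ∀ r, s + r ≤ N → u (s + r) ≤ x (b + r) (w (s + r)) := by
  intro r
  induction r with
  | zero => intro _; simpa using hb
  | succ r ih =>
    intro hr
    have h1 := ih (by omega)
    calc u (s + (r + 1)) ≤ φ (w (s + r + 1)) (w (s + r)) (u (s + r)) := hu (s + r) (by omega)
      _ ≤ φ (w (s + r + 1)) (w (s + r)) (x (b + r) (w (s + r))) := h.mono _ _ h1
      _ ≤ x (b + r + 1) (w (s + r + 1)) := h.le _ _ _

/-- Erasing the decreasing loops of a path either shortens it to length less than `card ι` or
exhibits a nondecreasing loop of length at most `card ι`. -/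
lemma loop_erasure [Fintype ι] (h : IsMaxOrbit φ x) (N : ℕ) :
    ∀ (w : ℕ → ι) (u : ℕ → ℝ), (∀ t < N, u (t + 1) ≤ φ (w (t + 1)) (w t) (u t)) →
      u 0 ≤ x 0 (w 0) →
      (∃ l < Fintype.card ι, u N ≤ x l (w N)) ∨
      ∃ n ≤ N, ∃ p, 1 ≤ p ∧ p ≤ Fintype.card ι ∧ ∀ m, u N ≤ x (n + p * m) (w N) := by
  induction N using Nat.strong_induction_on with
  | _ N ih =>
  intro w u hu h0
  by_cases hN : N < Fintype.card ι
  · exact Or.inl ⟨N, hN, by simpa using h.dominate hu h0 N (by omega)⟩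
  push Not at hN
  obtain ⟨a, b, hab, hw⟩ := Fintype.exists_ne_map_eq_of_card_lt
    (fun t : Fin (Fintype.card ι + 1) => w t) (by simp)
  obtain ⟨s, t, hst, ht, hw⟩ : ∃ s t : ℕ, s < t ∧ t ≤ Fintype.card ι ∧ w s = w t := by
    rcases lt_or_gt_of_ne hab with hlt | hlt
    · exact ⟨a, b, hlt, by omega, hw⟩
    · exact ⟨b, a, hlt, by omega, hw.symm⟩
  obtain ⟨p, rfl⟩ : ∃ p, t = s + p := ⟨t - s, by omega⟩
  by_cases hd : u (s + p) ≤ u s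
  · have key := ih (N - p) (by omega) (fun τ => if τ ≤ s then w τ else w (τ + p))
      (fun τ => if τ ≤ s then u τ else u (τ + p)) ?_ (by simpa using h0)
    · have e1 : (if N - p ≤ s then w (N - p) else w (N - p + p)) = w N := by
        split_ifs with hc
        · have : N - p = s := by omega
          rw [this, hw]; congr 1; omega
        · congr 1; omega
      have e2 : u N ≤ (if N - p ≤ s then u (N - p) else u (N - p + p)) := by
        split_ifs with hc
        · have e : N - p = s := by omega
          have e' : N = s + p := by omega
          rw [e, e']; exact hd
        · have : N - p + p = N := by omega
          rw [this]
      simp only [e1] at key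
      rcases key with ⟨l, hl, hle⟩ | ⟨n, hn, q, hq1, hq2, hq⟩
      · exact Or.inl ⟨l, hl, e2.trans hle⟩
      · exact Or.inr ⟨n, by omega, q, hq1, hq2, fun m => e2.trans (hq m)⟩
    · intro τ hτ
      rcases lt_trichotomy τ s with hc | hc | hc
      · simpa [hc.le, Nat.succ_le_of_lt hc] using hu τ (by omega)
      · subst hc
        have := hu (τ + p) (by omega)
        simp only [le_refl, if_true, Nat.not_succ_le_self, if_false]
        rw [hw, show τ + 1 + p = τ + p + 1 by omega]
        exact this.trans (h.mono _ _ hd)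
      · have := hu (τ + p) (by omega)
        simp only [not_le.2 hc, if_false, show ¬ τ + 1 ≤ s by omega]
        rwa [show τ + 1 + p = τ + p + 1 by omega]
  · push Not at hd
    have h1 : u s ≤ x s (w s) := by simpa using h.dominate hu h0 s (by omega)
    have h2 : ∀ m, u (s + p) ≤ x (s + p + p * m) (w s) := by
      intro m
      induction m with
      | zero => rw [hw]; simpa using h.dominate hu h1 p (by omega)
      | succ m ihm =>
        have := h.dominate hu (hd.le.trans ihm) p (by omega)
        rw [← hw] at this
        rwa [show s + p + p * (m + 1) = s + p + p * m + p by ring]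
    refine Or.inr ⟨N, le_rfl, p, by omega, by omega, fun m => ?_⟩
    have := h.dominate hu (s := s + p) (b := s + p + p * m) (by rw [← hw]; exact h2 m)
      (N - (s + p)) (by omega)
    rwa [show s + p + (N - (s + p)) = N by omega,
      show s + p + p * m + (N - (s + p)) = N + p * m by omega] at this

lemma exists_path (h : IsMaxOrbit φ x) (n : ℕ) : ∀ j, ∃ w : ℕ → ι, w n = j ∧
    ∀ t < n, x (t + 1) (w (t + 1)) = φ (w (t + 1)) (w t) (x t (w t)) := by
  induction n with
  | zero => exact fun j => ⟨fun _ => j, rfl, by simp⟩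
  | succ n ih =>
    intro j
    obtain ⟨i, hi⟩ := h.att n j
    obtain ⟨w, hw, hp⟩ := ih i
    refine ⟨fun t => if t ≤ n then w t else j, by simp, fun t ht => ?_⟩
    rcases Nat.lt_or_ge t n with hc | hc
    · simpa [hc.le, Nat.succ_le_of_lt hc] using hp t hc
    · obtain rfl : t = n := by omega
      simpa [hw] using hi

lemma record [Fintype ι] (h : IsMaxOrbit φ x) {n : ℕ} {j : ι} (hn : Fintype.card ι ≤ n)
    (hr : ∀ m < n, x m j < x n j) (m : ℕ) :
    x n j ≤ x (n + (Fintype.card ι).factorial * m) j := by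
  obtain ⟨w, rfl, hp⟩ := h.exists_path n j
  rcases h.loop_erasure n w (fun t => x t (w t)) (fun t ht => (hp t ht).le) le_rfl with
    ⟨l, hl, hle⟩ | ⟨a, ha, p, hp1, hp2, hle⟩
  · exact absurd hle (not_le.2 (hr l (by omega)))
  · obtain rfl : a = n := by
      by_contra hne
      exact absurd (by simpa using hle 0) (not_le.2 (hr a (by omega)))
    obtain ⟨q, hq⟩ := Nat.dvd_factorial hp1 hp2
    rw [hq, mul_assoc]
    exact hle _

lemma bddAbove (h : IsMaxOrbit φ x) (i : ι) :
    IsBoundedUnder (· ≤ ·) atTop (fun n => x n i) :=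
  isBoundedUnder_of ⟨1, fun n => h.le_one n i⟩

lemma cobdd (h : IsMaxOrbit φ x) (i : ι) :
    IsCoboundedUnder (· ≤ ·) atTop (fun n => x n i) :=
  (isBoundedUnder_of ⟨0, fun n => h.nonneg n i⟩ :
    IsBoundedUnder (· ≥ ·) atTop (fun n => x n i)).isCoboundedUnder_flip

lemma exists_limsup_le [Fintype ι] (h : IsMaxOrbit φ x) (i : ι) :
    ∃ j, limsup (fun n => x n i) atTop ≤ φ i j (limsup (fun n => x n j) atTop) := by
  by_contra! hc
  have h1 : ∀ j, ∃ v < limsup (fun n => x n i) atTop, ∀ᶠ n in atTop, φ i j (x n j) < v := by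
    intro j
    obtain ⟨v, hv1, hv2⟩ := exists_between (hc j)
    refine ⟨v, hv2, ?_⟩
    have := (h.cont i j).continuousAt.eventually_lt_const hv1
    obtain ⟨δ, hδ, hb⟩ := Metric.eventually_nhds_iff.1 this
    have h2 : φ i j (limsup (fun n => x n j) atTop + δ / 2) < v :=
      hb (by rw [Real.dist_eq, add_sub_cancel_left, abs_of_pos (by linarith)]; linarith)
    have h3 := eventually_lt_of_limsup_lt
      (show limsup (fun n => x n j) atTop < limsup (fun n => x n j) atTop + δ / 2 by linarith)
      (h.bddAbove j)
    filter_upwards [h3] with n hn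
    exact (h.mono i j hn.le).trans_lt h2
  choose v hv1 hv2 using h1
  have hne : Nonempty ι := ⟨i⟩
  obtain ⟨j0, hj0⟩ := Finite.exists_max v
  have h4 : ∀ᶠ n in atTop, x (n + 1) i ≤ v j0 := by
    filter_upwards [eventually_all.2 hv2] with n hn
    obtain ⟨j, hj⟩ := h.att n i
    rw [hj]
    exact (hn j).le.trans (hj0 j)
  have h5 : ∀ᶠ n in atTop, x n i ≤ v j0 := by
    filter_upwards [(tendsto_sub_atTop_nat 1).eventually h4, eventually_ge_atTop 1] with n hn h1
    rwa [Nat.sub_add_cancel h1] at hn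
  exact absurd (limsup_le_of_le (h.cobdd i) h5) (not_le.2 (hv1 j0))

/-- If some coordinate does not converge, then some non-convergent coordinate converges along an
arithmetic progression. -/
lemma exists_new_tendsto [Fintype ι] (h : IsMaxOrbit φ x)
    (hS : ∃ i, ¬ ∃ l, Tendsto (fun n => x n i) atTop (𝓝 l)) :
    ∃ j, (¬ ∃ l, Tendsto (fun n => x n j) atTop (𝓝 l)) ∧
      ∃ P r, 1 ≤ P ∧ ∃ l, Tendsto (fun n => x (r + P * n) j) atTop (𝓝 l) := by
  set Y : ι → ℝ := fun i => limsup (fun n => x n i) atTop with hY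
  have up : ∀ i, ∀ v > Y i, ∀ᶠ n in atTop, x n i < v := fun i v hv =>
    eventually_lt_of_limsup_lt hv (h.bddAbove i)
  have freq : ∀ i, ∀ v < Y i, ∃ᶠ n in atTop, v < x n i := fun i v hv =>
    frequently_lt_of_lt_limsup (h.cobdd i) hv
  let S : Set ι := {i | ∃ l, Tendsto (fun n => x n i) atTop (𝓝 l)}
  have pred : ∀ i : (Sᶜ : Set ι), ∃ j : (Sᶜ : Set ι), Y i ≤ φ i j (Y j) := by
    rintro ⟨i, hi⟩
    obtain ⟨j, hj⟩ := h.exists_limsup_le i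
    refine ⟨⟨j, fun ⟨l, hl⟩ => hi ?_⟩, hj⟩
    have hlY : l = Y j := hl.limsup_eq.symm
    refine ⟨Y i, ?_⟩
    rw [← tendsto_add_atTop_iff_nat 1]
    refine tendsto_order.2 ⟨fun v hv => ?_, fun v hv => ?_⟩
    · have : Tendsto (fun n => φ i j (x n j)) atTop (𝓝 (φ i j l)) :=
        ((h.cont i j).tendsto l).comp hl
      rw [hlY] at this
      filter_upwards [this.eventually_const_lt (hv.trans_le hj)] with n hn
      exact hn.trans_le (h.le n i j)
    · exact (tendsto_add_atTop_nat 1).eventually (up i v hv)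
  choose c hc using pred
  obtain ⟨i0, hi0⟩ := hS
  obtain ⟨a, b, hab, hcab⟩ := Finite.exists_ne_map_eq_of_infinite
    (fun n : ℕ => c^[n] ⟨i0, hi0⟩)
  obtain ⟨j, p, hp, hjp⟩ : ∃ j : (Sᶜ : Set ι), ∃ p, 1 ≤ p ∧ c^[p] j = j := by
    rcases lt_or_gt_of_ne hab with hlt | hlt
    · refine ⟨c^[a] ⟨i0, hi0⟩, b - a, by omega, ?_⟩
      rw [← Function.iterate_add_apply, Nat.sub_add_cancel hlt.le]; exact hcab.symm
    · refine ⟨c^[b] ⟨i0, hi0⟩, a - b, by omega, ?_⟩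
      rw [← Function.iterate_add_apply, Nat.sub_add_cancel hlt.le]; exact hcab
  refine ⟨j, j.2, ?_⟩
  have back : ∀ q : ℕ, ∀ n, Y (c^[q] j) ≤ x n (c^[q] j) → Y j ≤ x (n + q) j := by
    intro q
    induction q with
    | zero => intro n hn; simpa using hn
    | succ q ih =>
      intro n hn
      rw [Function.iterate_succ_apply'] at hn
      have := ih (n + 1) ((hc (c^[q] j)).trans ((h.mono _ _ hn).trans (h.le n _ _)))
      rwa [show n + (q + 1) = n + 1 + q by omega]
  by_cases hex : ∃ n, Y j ≤ x n j
  · obtain ⟨n, hn⟩ := hex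
    have hall : ∀ m, Y j ≤ x (n + p * m) j := by
      intro m
      induction m with
      | zero => simpa using hn
      | succ m ih =>
        have := back p (n + p * m) (by rw [hjp]; exact ih)
        rwa [show n + p * (m + 1) = n + p * m + p by ring]
    refine ⟨p, n, hp, Y j, tendsto_order.2 ⟨fun v hv => .of_forall fun m => hv.trans_le (hall m),
      fun v hv => ?_⟩⟩
    exact (tendsto_add_mul_atTop n hp).eventually (up j v hv)
  · push Not at hex
    set P := (Fintype.card ι).factorial with hPdef
    have hP : 0 < P := Nat.factorial_pos _
    have key : ∀ ε > 0, ∃ r : Fin P, ∀ᶠ m in atTop, Y j - ε < x (r + P * m) j := by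
      intro ε hε
      obtain ⟨n, hn1, hn2, hn3⟩ : ∃ n, Fintype.card ι ≤ n ∧ (∀ m < n, x m j < x n j) ∧
          Y j - ε < x n j := by
        obtain ⟨M, hM1, hM2, hM3⟩ : ∃ M < Y j, Y j - ε ≤ M ∧
            ∀ m < Fintype.card ι, x m j ≤ M := by
          have : ∀ᶠ M in 𝓝[<] (Y j), (Y j - ε ≤ M) ∧
              ∀ m ∈ Finset.range (Fintype.card ι), x m j ≤ M := by
            refine Filter.Eventually.and ?_ ((Finset.eventually_all _).2 fun m _ => ?_)
            · exact mem_nhdsWithin_of_mem_nhds (Ici_mem_nhds (by linarith))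
            · exact mem_nhdsWithin_of_mem_nhds (Ici_mem_nhds (hex m))
          obtain ⟨M, hM, hM'⟩ := (this.and self_mem_nhdsWithin).exists
          exact ⟨M, hM', hM.1, fun m hm => hM.2 m (Finset.mem_range.2 hm)⟩
        classical
        have hfr := (freq j M hM1).exists
        refine ⟨Nat.find hfr, ?_, fun m hm => ?_, hM2.trans_lt (Nat.find_spec hfr)⟩
        · by_contra hlt
          push Not at hlt
          exact absurd (hM3 _ hlt) (not_le.2 (Nat.find_spec hfr))
        · exact (not_lt.1 (Nat.find_min hfr hm)).trans_lt (Nat.find_spec hfr)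
      refine ⟨⟨n % P, Nat.mod_lt _ hP⟩, ?_⟩
      filter_upwards [eventually_ge_atTop (n / P)] with m hm
      have := h.record hn1 hn2 (m - n / P)
      have e : n + P * (m - n / P) = n % P + P * m := by
        obtain ⟨d, rfl⟩ := Nat.exists_eq_add_of_le hm
        rw [Nat.add_sub_cancel_left, mul_add, ← add_assoc, Nat.mod_add_div]
      rw [← hPdef, e] at this
      exact hn3.trans_le this
    obtain ⟨r, hr⟩ : ∃ r : Fin P, ∀ ε > 0, ∀ᶠ m in atTop, Y j - ε < x (r + P * m) j := by
      by_contra! hcon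
      choose ε hε hbad using hcon
      have hne : Nonempty (Fin P) := ⟨⟨0, hP⟩⟩
      obtain ⟨r0, hr0⟩ := Finite.exists_min ε
      obtain ⟨r, hr⟩ := key (ε r0) (hε r0)
      refine hbad r (hr.mono fun m hm => ?_)
      linarith [hr0 r]
    refine ⟨P, r, hP, Y j, tendsto_order.2 ⟨fun v hv => ?_, fun v hv =>
      .of_forall fun m => (hex _).trans hv⟩⟩
    filter_upwards [hr (Y j - v) (by linarith)] with m hm
    linarith

lemma exists_power [Fintype ι] [Nonempty ι] (h : IsMaxOrbit φ x) (P r : ℕ) (hP : 1 ≤ P) :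
    ∃ ψ, IsMaxOrbit ψ (fun n => x (r + P * n)) := by
  suffices H : ∃ ψ : ι → ι → ℝ → ℝ, (∀ i j, Monotone (ψ i j)) ∧ (∀ i j, Continuous (ψ i j)) ∧
      (∀ n i j, ψ i j (x n j) ≤ x (n + P) i) ∧ ∀ n i, ∃ j, x (n + P) i = ψ i j (x n j) by
    obtain ⟨ψ, h1, h2, h3, h4⟩ := H
    refine ⟨ψ, h1, h2, fun n i j => ?_, fun n i => ?_, fun n i => h.nonneg _ i,
      fun n i => h.le_one _ i⟩
    · simpa only [mul_add, mul_one, ← add_assoc] using h3 (r + P * n) i j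
    · simpa only [mul_add, mul_one, ← add_assoc] using h4 (r + P * n) i
  induction P, hP using Nat.le_induction with
  | base => exact ⟨φ, h.mono, h.cont, h.le, h.att⟩
  | succ P _ ih =>
    obtain ⟨ψ, h1, h2, h3, h4⟩ := ih
    refine ⟨fun i j t => Finset.univ.sup' Finset.univ_nonempty fun k => φ i k (ψ k j t),
      fun i j s t hst => ?_, fun i j => ?_, fun n i j => ?_, fun n i => ?_⟩
    · exact Finset.sup'_mono_fun fun k _ => h.mono i k (h1 k j hst)
    · exact Continuous.finset_sup'_apply _ fun k _ => (h.cont i k).comp (h2 k j)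
    · exact Finset.sup'_le _ _ fun k _ => (h.mono i k (h3 n k j)).trans (h.le _ _ _)
    · obtain ⟨k, hk⟩ := h.att (n + P) i
      obtain ⟨j, hj⟩ := h4 n k
      refine ⟨j, le_antisymm ?_ ?_⟩
      · rw [← add_assoc, hk, hj]
        exact Finset.le_sup' (fun k => φ i k (ψ k j (x n j))) (Finset.mem_univ k)
      · exact Finset.sup'_le _ _ fun k _ => (h.mono i k (h3 n k j)).trans (h.le _ _ _)

lemma exists_tendsto_progression [Fintype ι] [Nonempty ι] (d : ℕ) :
    ∀ {φ : ι → ι → ℝ → ℝ} {x : ℕ → ι → ℝ}, IsMaxOrbit φ x →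
      {i | ¬ ∃ l, Tendsto (fun n => x n i) atTop (𝓝 l)}.ncard ≤ d →
      ∃ P r, 1 ≤ P ∧ ∀ i, ∃ l, Tendsto (fun n => x (r + P * n) i) atTop (𝓝 l) := by
  induction d with
  | zero =>
    intro φ x _ hd
    have : {i | ¬ ∃ l, Tendsto (fun n => x n i) atTop (𝓝 l)} = ∅ := by
      rw [← Set.ncard_eq_zero (Set.toFinite _)]; omega
    refine ⟨1, 0, le_rfl, fun i => ?_⟩
    have hi : i ∉ {i | ¬ ∃ l, Tendsto (fun n => x n i) atTop (𝓝 l)} := by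
      rw [this]; exact Set.notMem_empty i
    simpa using not_not.1 hi
  | succ d ih =>
    intro φ x h hd
    by_cases hS : ∃ i, ¬ ∃ l, Tendsto (fun n => x n i) atTop (𝓝 l)
    · obtain ⟨j, hj, P, r, hP, l, hl⟩ := h.exists_new_tendsto hS
      obtain ⟨ψ, hψ⟩ := h.exists_power P r hP
      have hsub : {i | ¬ ∃ l, Tendsto (fun n => x (r + P * n) i) atTop (𝓝 l)} ⊂
          {i | ¬ ∃ l, Tendsto (fun n => x n i) atTop (𝓝 l)} := by
        refine ⟨fun i hi hi' => hi ?_, fun hsub => hsub hj ⟨l, hl⟩⟩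
        obtain ⟨l', hl'⟩ := hi'
        exact ⟨l', hl'.comp (tendsto_add_mul_atTop r hP)⟩
      have := Set.ncard_lt_ncard hsub (Set.toFinite _)
      obtain ⟨Q, s, hQ, hs⟩ := ih hψ (by omega)
      refine ⟨P * Q, r + P * s, Nat.mul_pos hP hQ, fun i => ?_⟩
      obtain ⟨l, hl⟩ := hs i
      refine ⟨l, hl.congr fun n => ?_⟩
      congr 1; ring
    · push Not at hS
      exact ⟨1, 0, le_rfl, fun i => by simpa using hS i⟩

theorem exists_tendsto_mul [Fintype ι] [Nonempty ι] (h : IsMaxOrbit φ x) :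
    ∃ P, 1 ≤ P ∧ ∃ l : ι → ℝ, ∀ i, Tendsto (fun n => x (P * n) i) atTop (𝓝 (l i)) := by
  obtain ⟨P, r, hP, hr⟩ := exists_tendsto_progression _ h le_rfl
  have shift : ∀ d i, ∃ l, Tendsto (fun n => x (r + d + P * n) i) atTop (𝓝 l) := by
    intro d
    induction d with
    | zero => simpa using hr
    | succ d ih =>
      intro i
      choose l hl using ih
      refine ⟨Finset.univ.sup' Finset.univ_nonempty fun j => φ i j (l j), ?_⟩
      have : (fun n => x (r + (d + 1) + P * n) i) = fun n =>
          Finset.univ.sup' Finset.univ_nonempty fun j => φ i j (x (r + d + P * n) j) := by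
        funext n
        rw [show r + (d + 1) + P * n = r + d + P * n + 1 by ring]
        refine le_antisymm ?_ (Finset.sup'_le _ _ fun j _ => h.le _ _ _)
        obtain ⟨j, hj⟩ := h.att (r + d + P * n) i
        rw [hj]
        exact Finset.le_sup' (fun j => φ i j (x (r + d + P * n) j)) (Finset.mem_univ j)
      rw [this]
      exact Tendsto.finset_sup'_nhds_apply _ fun j _ => ((h.cont i j).tendsto _).comp (hl j)
  choose l hl using shift (P * r - r)
  refine ⟨P, hP, l, fun i => (tendsto_add_atTop_iff_nat r).1 ((hl i).congr fun n => ?_)⟩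
  have : r ≤ P * r := Nat.le_mul_of_pos_left r hP
  congr 1
  rw [mul_add]; omega

end IsMaxOrbit

/-- `x` and `y` are joined by a possibly degenerate arc that avoids `z`. -/
def ArcJoined {T : Type*} [TopologicalSpace T] (z x y : T) : Prop :=
  ∃ (γ : ℝ → T) (a b : ℝ), a ≤ b ∧ ContinuousOn γ (Icc a b) ∧ InjOn γ (Icc a b) ∧
    γ a = x ∧ γ b = y ∧ z ∉ γ '' Icc a b

/-- The intersection of all connected sets containing `x` and `y`. -/
def connHull {T : Type*} [TopologicalSpace T] (x y : T) : Set T :=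
  ⋂₀ {C | IsPreconnected C ∧ x ∈ C ∧ y ∈ C}

section Joined

variable {T : Type*} [TopologicalSpace T] {x y z w : T}

lemma ArcJoined.refl (h : x ≠ z) : ArcJoined z x x :=
  ⟨fun _ => x, 0, 0, le_rfl, continuousOn_const, by simp, rfl, rfl, by simpa using h.symm⟩

lemma ArcJoined.symm : ArcJoined z x y → ArcJoined z y x := by
  rintro ⟨γ, a, b, hab, hc, hi, rfl, rfl, hz⟩
  have hm : MapsTo (fun t : ℝ => -t) (Icc (-b) (-a)) (Icc a b) := fun t ht =>
    ⟨by linarith [ht.2], by linarith [ht.1]⟩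
  refine ⟨fun t => γ (-t), -b, -a, by linarith, hc.comp continuous_neg.continuousOn hm,
    fun s hs t ht hst => neg_injective (hi (hm hs) (hm ht) hst), by simp, by simp, ?_⟩
  rintro ⟨t, ht, rfl⟩
  exact hz ⟨-t, hm ht, rfl⟩

lemma ArcJoined.ne_left : ArcJoined z x y → x ≠ z := by
  rintro ⟨γ, a, b, hab, -, -, rfl, -, hz⟩ rfl
  exact hz ⟨a, left_mem_Icc.2 hab, rfl⟩

lemma ArcJoined.trans [T2Space T] : ArcJoined z x y → ArcJoined z y w → ArcJoined z x w := by
  rintro ⟨γ, a, b, hab, hc, hi, rfl, rfl, hz⟩ ⟨δ, c, d, hcd, hc', hi', hδ, rfl, hz'⟩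
  have hcl : IsClosed (δ '' Icc c d) := (isCompact_Icc.image_of_continuousOn hc').isClosed
  have hK : IsCompact (Icc a b ∩ γ ⁻¹' (δ '' Icc c d)) :=
    isCompact_Icc.of_isClosed_subset (hc.preimage_isClosed_of_isClosed isClosed_Icc hcl)
      inter_subset_left
  obtain ⟨t, ⟨ht, s, hs, hst⟩, hmin⟩ := hK.exists_isLeast
    ⟨b, right_mem_Icc.2 hab, c, left_mem_Icc.2 hcd, hδ⟩
  have hm : MapsTo (fun u => u - t + s) (Icc t (t + d - s)) (Icc c d) := fun u hu =>
    ⟨by linarith [hu.1, hs.1], by linarith [hu.2]⟩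
  have hm1 : Icc a t ⊆ Icc a b := Icc_subset_Icc_right ht.2
  have hval : ∀ u ∈ Icc t (t + d - s), (if u ≤ t then γ u else δ (u - t + s)) =
      δ (u - t + s) := by
    intro u hu
    split_ifs with h
    · obtain rfl : u = t := le_antisymm h hu.1
      simp [hst]
    · rfl
  have hval1 : ∀ u ∈ Icc a t, (if u ≤ t then γ u else δ (u - t + s)) = γ u := fun u hu =>
    if_pos hu.2
  have hU : Icc a (t + d - s) = Icc a t ∪ Icc t (t + d - s) :=
    (Icc_union_Icc_eq_Icc ht.1 (by linarith [hs.2])).symm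
  refine ⟨fun u => if u ≤ t then γ u else δ (u - t + s), a, t + d - s,
    by linarith [ht.1, hs.2], ?_, ?_, by simp [ht.1], ?_, ?_⟩
  · rw [hU]
    refine ContinuousOn.union_of_isClosed ((hc.mono hm1).congr hval1) ?_ isClosed_Icc isClosed_Icc
    exact (hc'.comp (by fun_prop) hm).congr hval
  · have cross : ∀ u ∈ Icc a t, ∀ v ∈ Icc t (t + d - s), γ u = δ (v - t + s) → u = v := by
      intro u hu v hv huv
      have h1 : t ≤ u := hmin ⟨hm1 hu, _, hm hv, huv.symm⟩
      obtain rfl : u = t := le_antisymm hu.2 h1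
      have := hi' hs (hm hv) (hst.trans huv)
      linarith
    rw [hU]
    rintro u (hu | hu) v (hv | hv) huv <;> beta_reduce at huv
    · rw [hval1 u hu, hval1 v hv] at huv
      exact hi (hm1 hu) (hm1 hv) huv
    · rw [hval1 u hu, hval v hv] at huv
      exact cross u hu v hv huv
    · rw [hval u hu, hval1 v hv] at huv
      exact (cross v hv u hu huv.symm).symm
    · rw [hval u hu, hval v hv] at huv
      have := hi' (hm hu) (hm hv) huv
      linarith
  · beta_reduce
    rw [hval _ (right_mem_Icc.2 (by linarith [hs.2]))]
    congr 1; ring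
  · rw [hU]
    rintro ⟨u, hu | hu, huz⟩ <;> beta_reduce at huz
    · rw [hval1 u hu] at huz
      exact hz ⟨u, hm1 hu, huz⟩
    · rw [hval u hu] at huz
      exact hz' ⟨_, hm hu, huz⟩

lemma isArcBetween_image [T2Space T] {γ : ℝ → T} {a b : ℝ} (hab : a < b)
    (hc : ContinuousOn γ (Icc a b)) (hi : InjOn γ (Icc a b)) :
    IsArcBetween (γ '' Icc a b) (γ a) (γ b) := by
  have hm : ∀ u : Icc (0 : ℝ) 1, a + (b - a) * u ∈ Icc a b := fun u =>
    ⟨by nlinarith [u.2.1], by nlinarith [u.2.2]⟩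
  let f : Icc (0 : ℝ) 1 → T := fun u => γ (a + (b - a) * u)
  have hf : Continuous f := hc.comp_continuous (by fun_prop) hm
  have hfi : Function.Injective f := fun u v huv => by
    have := hi (hm u) (hm v) huv
    have h2 : (b - a) * (u : ℝ) = (b - a) * v := by linarith
    exact Subtype.ext (mul_left_cancel₀ (by linarith) h2)
  have hr : range f = γ '' Icc a b := by
    ext p
    constructor
    · rintro ⟨u, rfl⟩
      exact ⟨_, hm u, rfl⟩
    · rintro ⟨t, ht, rfl⟩
      have hba : 0 < b - a := by linarith
      refine ⟨⟨(t - a) / (b - a), div_nonneg (by linarith [ht.1]) hba.le,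
        (div_le_one hba).2 (by linarith [ht.2])⟩, ?_⟩
      simp only [f]
      rw [mul_div_cancel₀ _ hba.ne', add_sub_cancel]
  refine ⟨((hf.isClosedEmbedding hfi).isEmbedding.toHomeomorph).trans (Homeomorph.setCongr hr),
    ?_, ?_⟩
  · change f _ = _
    simp [f]
  · change f _ = _
    simp [f]

lemma IsArcBetween.exists_param {A : Set T} (h : IsArcBetween A x y) :
    ∃ γ : ℝ → T, Continuous γ ∧ InjOn γ (Icc 0 1) ∧ γ 0 = x ∧ γ 1 = y ∧ γ '' Icc 0 1 = A := by
  obtain ⟨e, h0, h1⟩ := h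
  refine ⟨IccExtend zero_le_one fun u => (e u : T), by
    exact (continuous_subtype_val.comp e.continuous).Icc_extend', ?_, ?_, ?_, ?_⟩
  · intro s hs t ht hst
    rw [IccExtend_of_mem _ _ hs, IccExtend_of_mem _ _ ht] at hst
    exact congrArg Subtype.val (e.injective (Subtype.ext hst))
  · rw [IccExtend_of_mem _ _ (left_mem_Icc.2 zero_le_one)]; exact h0
  · rw [IccExtend_of_mem _ _ (right_mem_Icc.2 zero_le_one)]; exact h1
  · ext p
    constructor
    · rintro ⟨t, ht, rfl⟩
      rw [IccExtend_of_mem _ _ ht]; exact (e _).2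
    · intro hp
      refine ⟨e.symm ⟨p, hp⟩, (e.symm ⟨p, hp⟩).2, ?_⟩
      rw [IccExtend_of_mem _ _ (e.symm ⟨p, hp⟩).2]; simp

lemma IsArc.exists_isArcBetween {A : Set T} (h : IsArc A) : ∃ x y, IsArcBetween A x y := by
  obtain ⟨e⟩ := h
  exact ⟨_, _, e, rfl, rfl⟩

lemma connHull_subset {C : Set T} (hC : IsPreconnected C) (hx : x ∈ C) (hy : y ∈ C) :
    connHull x y ⊆ C :=
  sInter_subset_of_mem ⟨hC, hx, hy⟩

lemma left_mem_connHull : x ∈ connHull x y := fun _ hC => hC.2.1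

lemma right_mem_connHull : y ∈ connHull x y := fun _ hC => hC.2.2

lemma connHull_comm (x y : T) : connHull x y = connHull y x := by
  simp only [connHull, and_comm]

lemma connHull_self (x : T) : connHull x x = {x} :=
  (connHull_subset isPreconnected_singleton rfl rfl).antisymm
    (singleton_subset_iff.2 left_mem_connHull)

end Joined

section Tree

variable {T : Type*} [MetricSpace T]

lemma IsArcBetween.eventually_joined {A : Set T} {p q x z : T} (h : IsArcBetween A p q)
    (hxz : x ≠ z) : ∀ᶠ y in 𝓝 x, y ∈ A → ArcJoined z x y := by
  obtain ⟨γ, hc, hi, -, -, rfl⟩ := h.exists_param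
  by_cases hx : x ∈ γ '' Icc 0 1
  · obtain ⟨t, ht, rfl⟩ := hx
    obtain ⟨δ, hδ, hδz⟩ := Metric.eventually_nhds_iff.1 (hc.continuousAt.eventually_ne hxz)
    have hK : IsCompact (γ '' (Icc 0 1 ∩ {u | δ ≤ dist u t})) :=
      (isCompact_Icc.inter_right
        (isClosed_le continuous_const (continuous_id.dist continuous_const))).image hc
    have hmem : (γ '' (Icc 0 1 ∩ {u | δ ≤ dist u t}))ᶜ ∈ 𝓝 (γ t) := by
      refine hK.isClosed.isOpen_compl.mem_nhds ?_
      rintro ⟨u, ⟨hu, hud⟩, hut⟩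
      rw [hi hu ht hut, mem_ofPred_eq, dist_self] at hud
      linarith
    filter_upwards [hmem] with y hy hyA
    obtain ⟨u, hu, rfl⟩ := hyA
    have hud : dist u t < δ := by
      by_contra hcon
      exact hy ⟨u, ⟨hu, not_lt.1 hcon⟩, rfl⟩
    have avoid : ∀ v ∈ uIcc u t, γ v ≠ z := fun v hv => hδz <| by
      rw [Real.dist_eq] at hud ⊢
      have := abs_sub_left_of_mem_uIcc hv
      have h2 := abs_sub_right_of_mem_uIcc hv
      rw [abs_sub_comm v t]
      exact h2.trans_lt (by rwa [abs_sub_comm])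
    have sub : uIcc u t ⊆ Icc 0 1 := (convex_Icc (0 : ℝ) 1).ordConnected.uIcc_subset hu ht
    rcases le_total u t with hle | hle
    · rw [uIcc_of_le hle] at avoid sub
      exact ArcJoined.symm ⟨γ, u, t, hle, hc.continuousOn, hi.mono sub, rfl, rfl,
        fun ⟨v, hv, hvz⟩ => avoid v hv hvz⟩
    · rw [uIcc_of_ge hle] at avoid sub
      exact ⟨γ, t, u, hle, hc.continuousOn, hi.mono sub, rfl, rfl,
        fun ⟨v, hv, hvz⟩ => avoid v hv hvz⟩
  · have hcl : IsClosed (γ '' Icc 0 1) := (isCompact_Icc.image hc).isClosed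
    filter_upwards [hcl.isOpen_compl.mem_nhds hx] with y hy hyA
    exact absurd hyA hy

namespace IsTreeSpace

lemma eventually_joined (hT : IsTreeSpace T) {x z : T} (hxz : x ≠ z) :
    ∀ᶠ y in 𝓝 x, ArcJoined z x y := by
  rcases hT.finiteArcs with ⟨p, hp⟩ | ⟨s, hs, hU⟩
  · have : ∀ q, q = p := fun q => by simpa [hp] using mem_univ q
    exact absurd ((this x).trans (this z).symm) hxz
  · have := (Finset.eventually_all s).2 fun A hA =>
      (hs A hA).exists_isArcBetween.choose_spec.choose_spec.eventually_joined hxz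
    filter_upwards [this] with y hy
    obtain ⟨A, hA, hyA⟩ := mem_sUnion.1 (hU ▸ mem_univ y)
    exact hy A hA hyA

lemma isOpen_joined (hT : IsTreeSpace T) (z x : T) : IsOpen {y | ArcJoined z x y} := by
  refine isOpen_iff_mem_nhds.2 fun y hy => ?_
  filter_upwards [hT.eventually_joined hy.symm.ne_left] with w hw
  exact hy.trans hw

lemma joined_of_isPreconnected (hT : IsTreeSpace T) {C : Set T} (hC : IsPreconnected C)
    {x y z : T} (hx : x ∈ C) (hy : y ∈ C) (hz : z ∉ C) : ArcJoined z x y := by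
  by_contra hcon
  have hxz : x ≠ z := fun h => hz (h ▸ hx)
  have hyz : y ≠ z := fun h => hz (h ▸ hy)
  obtain ⟨w, -, hw1, hw2⟩ := hC {w | ArcJoined z x w}
    (⋃ p ∈ {p | p ≠ z ∧ ¬ ArcJoined z x p}, {w | ArcJoined z p w}) (hT.isOpen_joined z x)
    (isOpen_biUnion fun p _ => hT.isOpen_joined z p)
    (fun w hw => by
      by_cases h : ArcJoined z x w
      · exact Or.inl h
      · have hwz : w ≠ z := fun h => hz (h ▸ hw)
        exact Or.inr (mem_biUnion (show w ∈ {p | p ≠ z ∧ ¬ ArcJoined z x p} from ⟨hwz, h⟩)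
          (ArcJoined.refl hwz)))
    ⟨x, hx, ArcJoined.refl hxz⟩
    ⟨y, hy, mem_biUnion (show y ∈ {p | p ≠ z ∧ ¬ ArcJoined z x p} from ⟨hyz, hcon⟩)
      (ArcJoined.refl hyz)⟩
  simp only [mem_iUnion] at hw2
  obtain ⟨p, ⟨-, hp⟩, hpw⟩ := hw2
  exact hp (ArcJoined.trans hw1 (ArcJoined.symm hpw))

/-- Every connected set containing the ends of an arc contains the arc. -/
lemma image_subset_of_isPreconnected (hT : IsTreeSpace T) {γ : ℝ → T} {a b : ℝ} (hab : a ≤ b)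
    (hc : ContinuousOn γ (Icc a b)) (hi : InjOn γ (Icc a b)) {C : Set T} (hC : IsPreconnected C)
    (ha : γ a ∈ C) (hb : γ b ∈ C) : γ '' Icc a b ⊆ C := by
  intro z hz
  by_contra hzC
  rcases hab.eq_or_lt with rfl | hlt
  · simp only [Icc_self, image_singleton, mem_singleton_iff] at hz
    exact hzC (hz ▸ ha)
  have hne : γ a ≠ γ b := fun h =>
    hlt.ne (hi (left_mem_Icc.2 hab) (right_mem_Icc.2 hab) h)
  obtain ⟨δ, c, d, hcd, hc', hi', h0, h1, hz'⟩ := hT.joined_of_isPreconnected hC ha hb hzC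
  have hcd' : c < d := by
    refine hcd.lt_of_ne ?_
    rintro rfl
    exact hne (h0.symm.trans h1)
  have hA := isArcBetween_image hcd' hc' hi'
  rw [h0, h1] at hA
  rw [(hT.uniqueArc _ _ hne).unique hA (isArcBetween_image hlt hc hi)] at hz'
  exact hz' hz

lemma exists_param (hT : IsTreeSpace T) (x y : T) :
    ∃ h : ℝ → T, Continuous h ∧ h 0 = x ∧ h 1 = y ∧ (x ≠ y → InjOn h (Icc 0 1)) ∧
      ∀ s ∈ Icc (0 : ℝ) 1, ∀ t ∈ Icc (0 : ℝ) 1, connHull (h s) (h t) = h '' uIcc s t := by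
  by_cases hxy : x = y
  · subst hxy
    refine ⟨fun _ => x, continuous_const, rfl, rfl, fun h => absurd rfl h, fun s _ t _ => ?_⟩
    rw [connHull_self, nonempty_uIcc.image_const]
  obtain ⟨A, hA, -⟩ := hT.uniqueArc x y hxy
  obtain ⟨h, hc, hi, h0, h1, -⟩ := hA.exists_param
  have main : ∀ s t, s ∈ Icc (0 : ℝ) 1 → t ∈ Icc (0 : ℝ) 1 → s ≤ t →
      connHull (h s) (h t) = h '' Icc s t := by
    intro s t hs ht hst
    refine (connHull_subset (isPreconnected_Icc.image _ hc.continuousOn)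
      (mem_image_of_mem _ (left_mem_Icc.2 hst)) (mem_image_of_mem _ (right_mem_Icc.2 hst))).antisymm
      (subset_sInter ?_)
    rintro C ⟨hC, hsC, htC⟩
    exact hT.image_subset_of_isPreconnected hst hc.continuousOn
      (hi.mono (Icc_subset_Icc hs.1 ht.2)) hC hsC htC
  refine ⟨h, hc, h0, h1, fun _ => hi, fun s hs t ht => ?_⟩
  rcases le_total s t with hst | hst
  · rw [uIcc_of_le hst, main s t hs ht hst]
  · rw [uIcc_of_ge hst, connHull_comm, main t s ht hs hst]

lemma isCompact_connHull (hT : IsTreeSpace T) (x y : T) : IsCompact (connHull x y) := by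
  obtain ⟨h, hc, rfl, rfl, -, hh⟩ := hT.exists_param x y
  rw [hh 0 (by simp) 1 (by simp)]
  exact isCompact_uIcc.image hc

lemma isPreconnected_connHull (hT : IsTreeSpace T) (x y : T) :
    IsPreconnected (connHull x y) := by
  obtain ⟨h, hc, rfl, rfl, -, hh⟩ := hT.exists_param x y
  rw [hh 0 (by simp) 1 (by simp)]
  exact isPreconnected_uIcc.image _ hc.continuousOn

lemma connHull_subset_connHull (hT : IsTreeSpace T) {x y p q : T} (hp : p ∈ connHull x y)
    (hq : q ∈ connHull x y) : connHull p q ⊆ connHull x y :=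
  connHull_subset (hT.isPreconnected_connHull x y) hp hq

lemma connHull_subset_union (hT : IsTreeSpace T) (x y z : T) :
    connHull x y ⊆ connHull x z ∪ connHull z y :=
  connHull_subset ((hT.isPreconnected_connHull x z).union z right_mem_connHull left_mem_connHull
    (hT.isPreconnected_connHull z y)) (Or.inl left_mem_connHull) (Or.inr right_mem_connHull)

/-- If `z` and `m` lie on the arc from `x` to `y`, then `z` precedes `m` or conversely. -/
lemma mem_connHull_or (hT : IsTreeSpace T) {x y z m : T} (hz : z ∈ connHull x y)
    (hm : m ∈ connHull x y) :
    (z ∈ connHull x m ∧ m ∈ connHull z y) ∨ (m ∈ connHull x z ∧ z ∈ connHull m y) := by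
  obtain ⟨h, hc, rfl, rfl, -, hh⟩ := hT.exists_param x y
  rw [hh 0 (by simp) 1 (by simp), uIcc_of_le zero_le_one] at hz hm
  obtain ⟨s, hs, rfl⟩ := hz
  obtain ⟨t, ht, rfl⟩ := hm
  rw [hh 0 (by simp) t ht, hh s hs 1 (by simp), hh 0 (by simp) s hs, hh t ht 1 (by simp),
    uIcc_of_le ht.1, uIcc_of_le hs.2, uIcc_of_le hs.1, uIcc_of_le ht.2]
  rcases le_total s t with hst | hst
  · exact Or.inl ⟨⟨s, ⟨hs.1, hst⟩, rfl⟩, ⟨t, ⟨hst, ht.2⟩, rfl⟩⟩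
  · exact Or.inr ⟨⟨t, ⟨ht.1, hst⟩, rfl⟩, ⟨s, ⟨hst, hs.2⟩, rfl⟩⟩

lemma eq_of_mem_connHull (hT : IsTreeSpace T) {x y z m : T} (hz : z ∈ connHull x y)
    (h1 : m ∈ connHull x z) (h2 : m ∈ connHull z y) : m = z := by
  obtain ⟨h, hc, rfl, rfl, hi, hh⟩ := hT.exists_param x y
  by_cases hne : h 0 = h 1
  · rw [hne, connHull_self] at hz
    obtain rfl : z = h 1 := hz
    rw [connHull_self] at h2
    exact h2
  rw [hh 0 (by simp) 1 (by simp), uIcc_of_le zero_le_one] at hz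
  obtain ⟨s, hs, rfl⟩ := hz
  rw [hh 0 (by simp) s hs, uIcc_of_le hs.1] at h1
  rw [hh s hs 1 (by simp), uIcc_of_le hs.2] at h2
  obtain ⟨u, hu, rfl⟩ := h1
  obtain ⟨v, hv, hvu⟩ := h2
  have := hi hne ⟨hs.1.trans hv.1, hv.2⟩ ⟨hu.1, hu.2.trans hs.2⟩ hvu
  rw [show u = s by linarith [hu.2, hv.1]]

lemma antisymm (hT : IsTreeSpace T) {a x y : T} (h1 : x ∈ connHull a y)
    (h2 : y ∈ connHull a x) : x = y :=
  (hT.eq_of_mem_connHull h1 h2 right_mem_connHull).symm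

lemma mem_connHull_of_mem_of_mem (hT : IsTreeSpace T) {a x m w : T} (h1 : x ∈ connHull a w)
    (h2 : m ∈ connHull x w) : x ∈ connHull a m := by
  have hm : m ∈ connHull a w := hT.connHull_subset_connHull h1 right_mem_connHull h2
  rcases hT.mem_connHull_or h1 hm with h | h
  · exact h.1
  · rw [hT.eq_of_mem_connHull h1 h.1 h2]
    exact right_mem_connHull

lemma isOpen_notMem_connHull (hT : IsTreeSpace T) (y z : T) :
    IsOpen {w | z ∉ connHull y w} := by
  refine isOpen_iff_mem_nhds.2 fun w hw => ?_
  have hwz : w ≠ z := by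
    rintro rfl
    exact hw right_mem_connHull
  filter_upwards [hT.eventually_joined hwz] with v hv
  obtain ⟨γ, a, b, hab, hc, -, rfl, rfl, hz⟩ := hv
  intro hzv
  rcases hT.connHull_subset_union _ _ (γ a) hzv with h | h
  · exact hw h
  · exact hz (connHull_subset (isPreconnected_Icc.image γ hc)
      ⟨a, left_mem_Icc.2 hab, rfl⟩ ⟨b, right_mem_Icc.2 hab, rfl⟩ h)

lemma isOpen_mem_connHull (hT : IsTreeSpace T) (a m : T) :
    IsOpen {w | m ∈ connHull a w ∧ w ≠ m} := by
  refine isOpen_iff_mem_nhds.2 fun w hw => ?_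
  have h1 : m ∉ connHull w w := by
    rw [connHull_self]; exact fun h => hw.2 h.symm
  filter_upwards [(hT.isOpen_notMem_connHull w m).mem_nhds h1] with v hv
  refine ⟨(hT.connHull_subset_union a w v hw.1).resolve_right ?_, ?_⟩
  · rwa [connHull_comm]
  · rintro rfl
    exact hv right_mem_connHull

/-- A tree is covered by the arcs from any given point to a fixed finite set. -/
lemma exists_finset_cover (hT : IsTreeSpace T) :
    ∃ E : Finset T, E.Nonempty ∧ ∀ c x, ∃ e ∈ E, x ∈ connHull c e := by
  classical
  rcases hT.finiteArcs with ⟨p, hp⟩ | ⟨s, hs, hU⟩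
  · have : ∀ q, q = p := fun q => by simpa [hp] using mem_univ q
    refine ⟨{p}, by simp, fun c x => ⟨p, by simp, ?_⟩⟩
    rw [this x]
    exact right_mem_connHull
  have hends : ∀ A ∈ s, ∃ p q, IsArcBetween A p q := fun A hA => (hs A hA).exists_isArcBetween
  have := hT.conn.toNonempty
  choose! p q hpq using hends
  have cover : ∀ c x, ∃ e ∈ s.image p ∪ s.image q, x ∈ connHull c e := by
    intro c x
    obtain ⟨A, hA, hxA⟩ := mem_sUnion.1 (hU ▸ mem_univ x)
    obtain ⟨γ, hc, hi, h0, h1, rfl⟩ := (hpq A hA).exists_param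
    have hx : x ∈ connHull (p (γ '' Icc 0 1)) (q (γ '' Icc 0 1)) := by
      rintro C ⟨hC, hpC, hqC⟩
      refine hT.image_subset_of_isPreconnected zero_le_one hc.continuousOn hi hC ?_ ?_ hxA
      · rwa [h0]
      · rwa [h1]
    rcases hT.connHull_subset_union _ _ c hx with h | h
    · rw [connHull_comm] at h
      exact ⟨_, Finset.mem_union_left _ (Finset.mem_image_of_mem _ hA), h⟩
    · exact ⟨_, Finset.mem_union_right _ (Finset.mem_image_of_mem _ hA), h⟩
  obtain ⟨c⟩ := hT.conn.toNonempty
  obtain ⟨e, he, -⟩ := cover c c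
  exact ⟨_, ⟨e, he⟩, cover⟩

/-- A parametrization `h` of the arc from `c` to `e` together with the continuous coordinate `ρ y`
of the point where the arc from `c` to `y` leaves the arc from `c` to `e`. -/
lemma exists_coord (hT : IsTreeSpace T) (c e : T) :
    ∃ (h : ℝ → T) (ρ : T → ℝ), Continuous h ∧ h 0 = c ∧ h '' Icc 0 1 = connHull c e ∧
      (c ≠ e → InjOn h (Icc 0 1)) ∧ Continuous ρ ∧ (∀ y, ρ y ∈ Icc (0 : ℝ) 1) ∧
      (∀ t ∈ Icc (0 : ℝ) 1, connHull c (h t) = h '' Icc 0 t) ∧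
      ∀ y, ∀ t ∈ Icc (0 : ℝ) 1, h t ∈ connHull c y ↔ t ≤ ρ y := by
  obtain ⟨h, hc, rfl, rfl, hi, hh⟩ := hT.exists_param c e
  have hh0 : ∀ t ∈ Icc (0 : ℝ) 1, connHull (h 0) (h t) = h '' Icc 0 t := fun t ht => by
    rw [hh 0 (by simp) t ht, uIcc_of_le ht.1]
  by_cases hne : h 0 = h 1
  · have hall : ∀ t ∈ Icc (0 : ℝ) 1, h t = h 0 := by
      intro t ht
      have : h t ∈ h '' Icc 0 1 := ⟨t, ht, rfl⟩
      rw [← hh0 1 (by simp), ← hne, connHull_self] at this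
      exact this
    refine ⟨h, fun _ => 1, hc, rfl, (hh0 1 (by simp)).symm, hi, continuous_const, by simp, hh0,
      fun y t ht => ?_⟩
    rw [hall t ht]
    exact iff_of_true left_mem_connHull ht.2
  have hi := hi hne
  have hex : ∀ y, ∃ r ∈ Icc (0 : ℝ) 1, ∀ t ∈ Icc (0 : ℝ) 1, h t ∈ connHull (h 0) y ↔ t ≤ r := by
    intro y
    have hK : IsCompact (Icc (0 : ℝ) 1 ∩ h ⁻¹' connHull (h 0) y) :=
      isCompact_Icc.inter_right ((hT.isCompact_connHull _ _).isClosed.preimage hc)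
    obtain ⟨r, ⟨hr, hry⟩, hmax⟩ := hK.exists_isGreatest ⟨0, by simp, left_mem_connHull⟩
    refine ⟨r, hr, fun t ht => ⟨fun htm => hmax ⟨ht, htm⟩, fun htr => ?_⟩⟩
    refine hT.connHull_subset_connHull left_mem_connHull hry ?_
    rw [hh0 r hr]
    exact ⟨t, ⟨ht.1, htr⟩, rfl⟩
  choose ρ hρ hρ' using hex
  refine ⟨h, ρ, hc, rfl, (hh0 1 (by simp)).symm, fun _ => hi, ?_, hρ, hh0, hρ'⟩
  rw [continuous_iff_continuousAt]
  intro y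
  refine tendsto_order.2 ⟨fun v hv => ?_, fun v hv => ?_⟩
  · rcases lt_or_ge v 0 with hv0 | hv0
    · exact .of_forall fun w => hv0.trans_le (hρ w).1
    obtain ⟨s, hs1, hs2⟩ := exists_between hv
    have hs : s ∈ Icc (0 : ℝ) 1 := ⟨by linarith, by linarith [(hρ y).2]⟩
    have hsy : h s ∈ connHull (h 0) y := (hρ' y s hs).2 hs2.le
    have hys : y ≠ h s := by
      intro hys
      have := (hρ' y _ (hρ y)).2 le_rfl
      rw [hys, hh0 s hs] at this
      rw [← hys] at this
      obtain ⟨u, hu, hue⟩ := this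
      have := hi ⟨hu.1, hu.2.trans hs.2⟩ (hρ y) hue
      linarith [hu.2]
    filter_upwards [(hT.isOpen_mem_connHull (h 0) (h s)).mem_nhds ⟨hsy, hys⟩] with w hw
    exact hs1.trans_le ((hρ' w s hs).1 hw.1)
  · rcases lt_or_ge 1 v with hv1 | hv1
    · exact .of_forall fun w => (hρ w).2.trans_lt hv1
    have hvm : v ∈ Icc (0 : ℝ) 1 := ⟨(hρ y).1.trans hv.le, hv1⟩
    have : h v ∉ connHull (h 0) y := fun hm => not_le.2 hv ((hρ' y v hvm).1 hm)
    filter_upwards [(hT.isOpen_notMem_connHull (h 0) (h v)).mem_nhds this] with w hw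
    exact not_le.1 fun hle => hw ((hρ' w v hvm).2 hle)

end IsTreeSpace

end Tree

lemma continuous_sSup_image_Icc {F : ℝ → ℝ} (hF : Continuous F) :
    Continuous fun t => sSup (F '' Icc 0 (max 0 t)) := by
  have heq : ∀ t, F '' Icc 0 (max 0 t) = (fun s => F (s * max 0 t)) '' Icc 0 1 := fun t => by
    rw [← image_image F (fun s => s * max 0 t), image_mul_right_Icc zero_le_one (le_max_left _ _),
      zero_mul, one_mul]
  simp only [heq]
  exact isCompact_Icc.continuous_sSup (f := fun t s => F (s * max 0 t)) (by fun_prop)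

lemma monotone_sSup_image_Icc {F : ℝ → ℝ} (hF : Continuous F) :
    Monotone fun t => sSup (F '' Icc 0 (max 0 t)) := fun _ _ hst =>
  csSup_le_csSup (isCompact_Icc.image hF).bddAbove
    ((nonempty_Icc.2 (le_max_left _ _)).image F)
    (image_mono (Icc_subset_Icc_right (max_le_max le_rfl hst)))

section AsympPeriodic

variable {T : Type*} [MetricSpace T]

lemma tendsto_hausdorffDist_image [CompactSpace T] {φ : T → T} (hφ : Continuous φ)
    {X : ℕ → Set T} {L : Set T} (hX : ∀ n, (X n).Nonempty) (hL : L.Nonempty)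
    (h : Tendsto (fun n => hausdorffDist (X n) L) atTop (𝓝 0)) :
    Tendsto (fun n => hausdorffDist (φ '' X n) (φ '' L)) atTop (𝓝 0) := by
  refine Metric.tendsto_atTop.2 fun ε hε => ?_
  obtain ⟨δ, hδ, hδε⟩ := Metric.uniformContinuous_iff.1
    (CompactSpace.uniformContinuous_of_continuous hφ) (ε / 2) (half_pos hε)
  obtain ⟨N, hN⟩ := Metric.tendsto_atTop.1 h δ hδ
  refine ⟨N, fun n hn => ?_⟩
  have hlt := hN n hn
  rw [Real.dist_0_eq_abs, abs_of_nonneg hausdorffDist_nonneg] at hlt ⊢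
  have htop : hausdorffEDist (X n) L ≠ ⊤ :=
    hausdorffEDist_ne_top_of_nonempty_of_bounded (hX n) hL
      (Bornology.IsBounded.all _) (Bornology.IsBounded.all _)
  refine (hausdorffDist_le_of_mem_dist (half_pos hε).le ?_ ?_).trans_lt (half_lt_self hε)
  · rintro _ ⟨x, hx, rfl⟩
    obtain ⟨y, hy, hxy⟩ := exists_dist_lt_of_hausdorffDist_lt hx hlt htop
    exact ⟨φ y, mem_image_of_mem _ hy, (hδε hxy).le⟩
  · rintro _ ⟨x, hx, rfl⟩
    obtain ⟨y, hy, hxy⟩ := exists_dist_lt_of_hausdorffDist_lt' hx hlt htop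
    rw [dist_comm] at hxy
    exact ⟨φ y, mem_image_of_mem _ hy, (hδε hxy).le⟩

lemma AsympPeriodic.of_image_iterate [CompactSpace T] {g : T → T} (hg : Continuous g)
    {A : Set T} (hA : A.Nonempty) {k : ℕ} (h : AsympPeriodic g (g^[k] '' A)) :
    AsympPeriodic g A := by
  obtain ⟨P, hP, L, hL, hLc, hlim⟩ := h
  have hφ : Continuous g^[(P - 1) * k] := hg.iterate _
  refine ⟨P, hP, g^[(P - 1) * k] '' L, hL.image _, hLc.image hφ, ?_⟩
  refine (tendsto_add_atTop_iff_nat k).1 ?_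
  have := tendsto_hausdorffDist_image hφ (fun n => (hA.image _).image _) hL hlim
  refine this.congr fun n => ?_
  rw [← image_comp, ← image_comp, ← Function.iterate_add, ← Function.iterate_add]
  obtain ⟨r, rfl⟩ := Nat.exists_eq_add_of_le hP
  congr 3
  rw [Nat.add_sub_cancel_left]
  ring

lemma AsympPeriodic.of_iterate {f : T → T} {q : ℕ} (hq : 1 ≤ q) {A : Set T}
    (h : AsympPeriodic f^[q] A) : AsympPeriodic f A := by
  obtain ⟨P, hP, L, hL, hLc, hlim⟩ := h
  refine ⟨q * P, Nat.mul_pos hq hP, L, hL, hLc, hlim.congr fun n => ?_⟩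
  rw [← Function.iterate_mul, mul_assoc]

namespace IsTreeSpace

/-- A subcontinuum containing a fixed point is asymptotically periodic. -/
lemma asympPeriodic_of_fixed (hT : IsTreeSpace T) {g : T → T} (hg : Continuous g) {B : Set T}
    (hB : IsCompact B) (hBc : IsPreconnected B) {c : T} (hc : c ∈ B) (hgc : g c = c) :
    AsympPeriodic g B := by
  obtain ⟨E, hE, hcov⟩ := hT.exists_finset_cover
  choose h ρ hh _ himg _ hρ hρm _ hρi using fun e : E => hT.exists_coord c e
  have hBn : ∀ n, IsCompact (g^[n] '' B) := fun n => hB.image (hg.iterate n)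
  have hBpre : ∀ n, IsPreconnected (g^[n] '' B) := fun n =>
    hBc.image _ (hg.iterate n).continuousOn
  have hcn : ∀ n, c ∈ g^[n] '' B := fun n => ⟨c, hc, Function.iterate_fixed hgc n⟩
  let x : ℕ → E → ℝ := fun n i => sSup (ρ i '' (g^[n] '' B))
  have hbdd : ∀ n i, BddAbove (ρ i '' (g^[n] '' B)) := fun n i =>
    ((hBn n).image (hρ i)).bddAbove
  have hx : ∀ n i, ∃ y ∈ g^[n] '' B, ρ i y = x n i := fun n i =>
    ((hBn n).image (hρ i)).sSup_mem ⟨_, mem_image_of_mem _ (hcn n)⟩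
  have hxm : ∀ n i, x n i ∈ Icc (0 : ℝ) 1 := fun n i => by
    obtain ⟨y, -, hy⟩ := hx n i
    exact hy ▸ hρm i y
  have hxi : ∀ n i, ∀ t ∈ Icc (0 : ℝ) 1, t ≤ x n i ↔ h i t ∈ g^[n] '' B := by
    refine fun n i t ht => ⟨fun htx => ?_, fun hm => ?_⟩
    · obtain ⟨y, hyB, hy⟩ := hx n i
      exact connHull_subset (hBpre n) (hcn n) hyB ((hρi i y t ht).2 (hy ▸ htx))
    · exact ((hρi i _ t ht).1 right_mem_connHull).trans
        (le_csSup (hbdd n i) (mem_image_of_mem _ hm))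
  have hdec : ∀ n, ∀ y ∈ g^[n] '' B, ∃ i, ∃ t ∈ Icc 0 (x n i), h i t = y := by
    intro n y hy
    obtain ⟨e, he, hye⟩ := hcov c y
    rw [← himg ⟨e, he⟩] at hye
    obtain ⟨t, ht, rfl⟩ := hye
    exact ⟨⟨e, he⟩, t, ⟨ht.1, (hxi n _ t ht).2 hy⟩, rfl⟩
  have hF : ∀ i j, Continuous fun u => ρ i (g (h j u)) := fun i j =>
    (hρ i).comp (hg.comp (hh j))
  have horb : IsMaxOrbit (fun i j t => sSup ((fun u => ρ i (g (h j u))) '' Icc 0 (max 0 t))) x := by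
    have hle : ∀ n i j,
        sSup ((fun u => ρ i (g (h j u))) '' Icc 0 (max 0 (x n j))) ≤ x (n + 1) i := by
      intro n i j
      rw [max_eq_right (hxm n j).1]
      refine csSup_le ((nonempty_Icc.2 (hxm n j).1).image _) ?_
      rintro _ ⟨u, hu, rfl⟩
      refine le_csSup (hbdd _ i) (mem_image_of_mem _ ?_)
      rw [Function.iterate_succ', image_comp]
      exact mem_image_of_mem _ ((hxi n j u ⟨hu.1, hu.2.trans (hxm n j).2⟩).1 hu.2)
    refine ⟨fun i j => monotone_sSup_image_Icc (hF i j), fun i j =>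
      continuous_sSup_image_Icc (hF i j), hle, fun n i => ?_, fun n i => (hxm n i).1,
      fun n i => (hxm n i).2⟩
    obtain ⟨y, hy, hyx⟩ := hx (n + 1) i
    rw [Function.iterate_succ', image_comp] at hy
    obtain ⟨z, hz, rfl⟩ := hy
    obtain ⟨j, t, ht, rfl⟩ := hdec n z hz
    refine ⟨j, le_antisymm ?_ (hle n i j)⟩
    rw [← hyx, max_eq_right (hxm n j).1]
    exact le_csSup (isCompact_Icc.image (hF i j)).bddAbove ⟨t, ht, rfl⟩
  have : Nonempty E := hE.to_subtype
  obtain ⟨P, hP, l, hl⟩ := horb.exists_tendsto_mul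
  have hlm : ∀ i, l i ∈ Icc (0 : ℝ) 1 := fun i =>
    isClosed_Icc.mem_of_tendsto (hl i) (.of_forall fun n => hxm _ _)
  have hclose : ∀ ε > 0, ∀ᶠ n in atTop, ∀ i, ∀ u ∈ Icc (0 : ℝ) 1,
      dist (h i (min u (l i))) (h i (min u (x (P * n) i))) ≤ ε := by
    intro ε hε
    refine eventually_all.2 fun i => ?_
    obtain ⟨δ, hδ, hδε⟩ := Metric.uniformContinuousOn_iff.1
      (isCompact_Icc.uniformContinuousOn_of_continuous (hh i).continuousOn) ε hε
    filter_upwards [Metric.tendsto_nhds.1 (hl i) δ hδ] with n hn u hu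
    refine (hδε _ ⟨le_min hu.1 (hlm i).1, min_le_of_left_le hu.2⟩ _
      ⟨le_min hu.1 (hxm _ i).1, min_le_of_left_le hu.2⟩ ?_).le
    rw [Real.dist_eq] at hn
    rw [dist_comm, Real.dist_eq]
    exact (abs_min_sub_min_le_max _ _ _ _).trans_lt (max_lt (by simpa using hδ) hn)
  refine ⟨P, hP, ⋃ i, h i '' Icc 0 (l i), ?_, ?_, ?_⟩
  · obtain ⟨i⟩ := this
    exact ⟨_, mem_iUnion.2 ⟨i, mem_image_of_mem _ (left_mem_Icc.2 (hlm i).1)⟩⟩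
  · exact isCompact_iUnion fun i => isCompact_Icc.image (hh i)
  · refine Metric.tendsto_nhds.2 fun ε hε => ?_
    filter_upwards [hclose (ε / 2) (half_pos hε)] with n hn
    rw [Real.dist_0_eq_abs, abs_of_nonneg hausdorffDist_nonneg]
    refine (hausdorffDist_le_of_mem_dist (half_pos hε).le ?_ ?_).trans_lt (half_lt_self hε)
    · intro y hy
      obtain ⟨i, t, ht, rfl⟩ := hdec _ y hy
      refine ⟨h i (min t (l i)), mem_iUnion.2 ⟨i, _, ⟨le_min ht.1 (hlm i).1, min_le_right _ _⟩,
        rfl⟩, ?_⟩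
      have := hn i t ⟨ht.1, ht.2.trans (hxm _ i).2⟩
      rwa [min_eq_left ht.2, dist_comm] at this
    · intro y hy
      obtain ⟨i, t, ht, rfl⟩ := mem_iUnion.1 hy
      have htm : t ∈ Icc (0 : ℝ) 1 := ⟨ht.1, ht.2.trans (hlm i).2⟩
      refine ⟨h i (min t (x (P * n) i)), (hxi _ i _ ⟨le_min ht.1 (hxm _ i).1,
        min_le_of_left_le htm.2⟩).1 (min_le_right _ _), ?_⟩
      have := hn i t htm
      rwa [min_eq_left ht.2] at this

lemma asympPeriodic_of_periodic (hT : IsTreeSpace T) {f : T → T} (hf : Continuous f) {A : Set T}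
    (hA : IsSubcontinuum A) {n q : ℕ} (hq : 1 ≤ q) {c : T} (hc : c ∈ f^[n] '' A)
    (hfc : f^[q] c = c) : AsympPeriodic f A := by
  have := hT.compact
  refine AsympPeriodic.of_iterate hq (AsympPeriodic.of_image_iterate (hf.iterate q) hA.1 (k := n) ?_)
  obtain ⟨r, rfl⟩ := Nat.exists_eq_add_of_le hq
  refine hT.asympPeriodic_of_fixed (hf.iterate _) (hA.2.1.image ((hf.iterate _).iterate _))
    (hA.2.2.isPreconnected.image _ ((hf.iterate _).iterate _).continuousOn) (c := f^[r * n] c) ?_ ?_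
  · obtain ⟨a, ha, rfl⟩ := hc
    refine ⟨a, ha, ?_⟩
    rw [← Function.iterate_mul, ← Function.iterate_add_apply]
    congr 1; ring
  · rw [← Function.iterate_add_apply, add_comm, Function.iterate_add_apply, hfc]

end IsTreeSpace

end AsympPeriodic

section NoPeriodic

variable {T : Type*} [MetricSpace T]

namespace IsTreeSpace

/-- Connected sets whose diameters do not tend to zero have a common point infinitely often. -/
lemma exists_lt_inter_nonempty (hT : IsTreeSpace T) {X : ℕ → Set T}
    (hX : ∀ n, IsPreconnected (X n)) (hd : ¬ Tendsto (fun n => diam (X n)) atTop (𝓝 0)) :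
    ∃ m n, m < n ∧ (X m ∩ X n).Nonempty := by
  have := hT.compact
  obtain ⟨ε, hε, hfr⟩ : ∃ ε > 0, ∃ᶠ n in atTop, ε ≤ diam (X n) := by
    by_contra! hcon
    refine hd (tendsto_order.2 ⟨fun v hv => .of_forall fun n => hv.trans_le diam_nonneg,
      fun v hv => ?_⟩)
    exact hcon v hv
  obtain ⟨φ, hφ, hφd⟩ := extraction_of_frequently_atTop hfr
  have hpair : ∀ n, ∃ p : T × T, p.1 ∈ X (φ n) ∧ p.2 ∈ X (φ n) ∧ ε / 2 ≤ dist p.1 p.2 := by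
    intro n
    by_contra! hcon
    have := diam_le_of_forall_dist_le (half_pos hε).le
      fun x hx y hy => (hcon (x, y) hx hy).le
    linarith [hφd n]
  choose p hp1 hp2 hpd using hpair
  obtain ⟨⟨a, b⟩, ψ, hψ, hlim⟩ := CompactSpace.tendsto_subseq p
  have ha : Tendsto (fun n => (p (ψ n)).1) atTop (𝓝 a) := (continuous_fst.tendsto _).comp hlim
  have hb : Tendsto (fun n => (p (ψ n)).2) atTop (𝓝 b) := (continuous_snd.tendsto _).comp hlim
  have hab : a ≠ b := by
    have : ε / 2 ≤ dist a b := ge_of_tendsto' (ha.dist hb) fun n => hpd _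
    exact dist_pos.1 (by linarith)
  obtain ⟨h, -, rfl, rfl, hi, hh⟩ := hT.exists_param a b
  have hi := hi hab
  have hza : h (1 / 2) ∉ connHull (h 0) (h 0) := by
    rw [connHull_self]
    intro hz
    have := hi ⟨by norm_num, by norm_num⟩ ⟨by norm_num, by norm_num⟩ hz
    norm_num at this
  have hzb : h (1 / 2) ∉ connHull (h 1) (h 1) := by
    rw [connHull_self]
    intro hz
    have := hi ⟨by norm_num, by norm_num⟩ ⟨by norm_num, by norm_num⟩ hz
    norm_num at this
  have hz : h (1 / 2) ∈ connHull (h 0) (h 1) := by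
    rw [hh 0 (by simp) 1 (by simp), uIcc_of_le zero_le_one]
    exact ⟨_, ⟨by norm_num, by norm_num⟩, rfl⟩
  have hev : ∀ᶠ n in atTop, h (1 / 2) ∈ X (φ (ψ n)) := by
    filter_upwards [ha.eventually ((hT.isOpen_notMem_connHull (h 0) _).mem_nhds hza),
      hb.eventually ((hT.isOpen_notMem_connHull (h 1) _).mem_nhds hzb)] with n hn1 hn2
    refine connHull_subset (hX _) (hp1 _) (hp2 _) ?_
    have h1 := (hT.connHull_subset_union _ _ _ hz).resolve_left hn1
    rw [connHull_comm (h 1)] at hn2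
    exact (hT.connHull_subset_union _ _ _ h1).resolve_right hn2
  obtain ⟨N, hN⟩ := eventually_atTop.1 hev
  exact ⟨_, _, hφ (hψ N.lt_succ_self), _, hN N le_rfl, hN _ N.le_succ⟩

/-- The order of a tree with root `a` is given by finitely many continuous functions. -/
lemma exists_order_coord (hT : IsTreeSpace T) (a : T) :
    ∃ (E : Finset T) (ρ : T → T → ℝ), (∀ e, Continuous (ρ e)) ∧
      ∀ x y, x ∈ connHull a y ↔ ∀ e ∈ E, ρ e x ≤ ρ e y := by
  obtain ⟨E, -, hcov⟩ := hT.exists_finset_cover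
  choose h ρ _ _ himg _ hρ hρm _ hρi using hT.exists_coord a
  refine ⟨E, ρ, hρ, fun x y => ⟨fun hxy e _ => ?_, fun hxy => ?_⟩⟩
  · exact (hρi e y _ (hρm e x)).1 (hT.connHull_subset_connHull left_mem_connHull hxy
      ((hρi e x _ (hρm e x)).2 le_rfl))
  · obtain ⟨e, he, hxe⟩ := hcov a x
    rw [← himg e] at hxe
    obtain ⟨t, ht, rfl⟩ := hxe
    exact (hρi e y t ht).2 (((hρi e _ t ht).1 right_mem_connHull).trans (hxy e he))

lemma isClosed_mem_connHull (hT : IsTreeSpace T) (a : T) {g : T → T} (hg : Continuous g) :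
    IsClosed {x | x ∈ connHull a (g x)} := by
  obtain ⟨E, ρ, hρ, hE⟩ := hT.exists_order_coord a
  simp only [hE, ofPred_forall]
  exact isClosed_biInter fun e _ => isClosed_le (hρ e) ((hρ e).comp hg)

lemma exists_strictMono_potential (hT : IsTreeSpace T) (a : T) :
    ∃ u : T → ℝ, Continuous u ∧ ∀ x y, x ∈ connHull a y → x ≠ y → u x < u y := by
  obtain ⟨E, ρ, hρ, hE⟩ := hT.exists_order_coord a
  refine ⟨fun x => ∑ e ∈ E, ρ e x, continuous_finsetSum _ fun e _ => hρ e, fun x y hxy hne => ?_⟩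
  refine Finset.sum_lt_sum ((hE x y).1 hxy) ?_
  by_contra! hcon
  exact hne (hT.antisymm hxy ((hE y x).2 hcon))

lemma connHull_subset_insert {X : Set T} (hX : IsPreconnected X) {a c : T} (ha : a ∈ X)
    (hc : c ∈ closure X) : connHull c a ⊆ insert c X :=
  connHull_subset (hX.subset_closure (subset_insert c X)
    (insert_subset hc subset_closure)) (mem_insert c X) (mem_insert_of_mem c ha)

/-- A map without fixed points on an invariant connected set has a fixed point in its boundary
towards which it moves some points arbitrarily close to it. -/
lemma exists_fixed_closure (hT : IsTreeSpace T) {g : T → T} (hg : Continuous g) {X : Set T}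
    (hX : IsPreconnected X) (hgX : MapsTo g X X) (hfix : ∀ x ∈ X, g x ≠ x) {a : T} (ha : a ∈ X) :
    ∃ c, g c = c ∧ c ∉ X ∧ c ∈ closure (X ∩ {x | x ∈ connHull a (g x)}) := by
  have := hT.compact
  obtain ⟨u, hu, hmono⟩ := hT.exists_strictMono_potential a
  obtain ⟨c, hc, hmax⟩ := (isClosed_closure (s := X ∩ {x | x ∈ connHull a (g x)})).isCompact
    |>.exists_isMaxOn ⟨a, subset_closure ⟨ha, left_mem_connHull⟩⟩ hu.continuousOn
  have hcX : c ∈ closure X := closure_mono inter_subset_left hc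
  have hca : c ∈ connHull a (g c) :=
    closure_minimal inter_subset_right (hT.isClosed_mem_connHull a hg) hc
  have hcn : c ∉ X := by
    intro hcX
    have hne : c ≠ g c := (hfix c hcX).symm
    obtain ⟨h, hh, h0, h1, hi, hsub⟩ := hT.exists_param c (g c)
    have hi := hi hne
    have hhalf : (1 / 2 : ℝ) ∈ Icc (0 : ℝ) 1 := ⟨by norm_num, by norm_num⟩
    have hm : h (1 / 2) ∉ connHull (g c) (g c) := by
      rw [connHull_self, ← h1]
      intro hz
      have := hi hhalf (by simp) hz
      norm_num at this
    have hev : ∀ᶠ t in 𝓝[>] (0 : ℝ), h (1 / 2) ∉ connHull (g c) (g (h t)) := by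
      have hcont : ContinuousAt (fun t => g (h t)) 0 := (hg.comp hh).continuousAt
      have := hcont.eventually (p := fun w => h (1 / 2) ∉ connHull (g c) w)
        ((hT.isOpen_notMem_connHull (g c) _).mem_nhds (by simpa [h0] using hm))
      exact nhdsWithin_le_nhds this
    obtain ⟨t, hmt, ht⟩ := (hev.and (Ioo_mem_nhdsGT (show (0 : ℝ) < 1 / 2 by norm_num))).exists
    have ht1 : t ∈ Icc (0 : ℝ) 1 := ⟨ht.1.le, by linarith [ht.2]⟩
    have himg : ∀ s ∈ Icc (0 : ℝ) 1, h s ∈ connHull c (g c) := fun s hs => by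
      have := hsub 0 (by simp) 1 (by simp)
      rw [h0, h1, uIcc_of_le zero_le_one] at this
      exact this ▸ mem_image_of_mem h hs
    have hsa : ∀ s ∈ Icc (0 : ℝ) 1, h s ∈ connHull a (g c) := fun s hs =>
      hT.connHull_subset_connHull hca right_mem_connHull (himg s hs)
    have hma : h (1 / 2) ∈ connHull a (g (h t)) := by
      refine (hT.connHull_subset_union _ _ (g (h t)) (hsa _ hhalf)).resolve_right ?_
      rwa [connHull_comm]
    have hcm : c ∈ connHull a (h (1 / 2)) := hT.mem_connHull_of_mem_of_mem hca (himg _ hhalf)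
    have htm : h t ∈ connHull c (h (1 / 2)) := by
      rw [← h0, hsub 0 (by simp) _ hhalf, uIcc_of_le hhalf.1]
      exact ⟨t, ⟨ht.1.le, ht.2.le⟩, rfl⟩
    have hta : h t ∈ connHull a (g (h t)) :=
      hT.connHull_subset_connHull left_mem_connHull hma
        (hT.connHull_subset_connHull hcm right_mem_connHull htm)
    have htX : h t ∈ X := connHull_subset hX ha (hgX hcX) (hsa t ht1)
    have hlt : u c < u (h t) := by
      refine hmono _ _ (hT.mem_connHull_of_mem_of_mem hca (himg t ht1)) fun heq => ?_
      exact ht.1.ne (hi (by simp) ht1 (h0.trans heq))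
    exact not_le.2 hlt (hmax (subset_closure ⟨htX, hta⟩))
  refine ⟨c, ?_, hcn, hc⟩
  by_contra hne
  have hgc : g c ∈ closure X := (hgX.closure hg) hcX
  rw [connHull_comm] at hca
  rcases connHull_subset_insert hX ha hgc hca with h | h
  · exact hne h.symm
  · exact hcn h

/-- Near a point `c` of its boundary outside of it, a connected set is a half-open arc,
parametrized by `h` and with coordinate `κ`, provided it is restricted to `κ < τ`. -/
lemma exists_end_coord (hT : IsTreeSpace T) {X : Set T} (hX : IsPreconnected X) {a c : T}
    (ha : a ∈ X) (hcX : c ∈ closure X) (hc : c ∉ X) :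
    ∃ (h : ℝ → T) (κ : T → ℝ) (τ : ℝ), 0 < τ ∧ Continuous h ∧ Continuous κ ∧ h 0 = c ∧ κ c = 0 ∧
      (∀ x ∈ X, 0 < κ x) ∧ (∀ t ∈ Ioo 0 τ, h t ∈ X ∧ κ (h t) = t) ∧
      (∀ x ∈ X, κ x < τ → h (κ x) = x) ∧
      ∀ x y, x ∈ X → κ x < τ → κ x < κ y → x ∉ connHull a y := by
  have hca : c ≠ a := by
    rintro rfl
    exact hc ha
  obtain ⟨E, -, hcov⟩ := hT.exists_finset_cover
  obtain ⟨h, κ, hh, h0, himg, hi, hκ, hκm, hsub, hκi⟩ := hT.exists_coord c a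
  have hi := hi hca
  have hκh : ∀ t ∈ Icc (0 : ℝ) 1, κ (h t) = t := by
    intro t ht
    refine le_antisymm ?_ ((hκi _ t ht).1 right_mem_connHull)
    have := (hκi (h t) _ (hκm _)).2 le_rfl
    rw [hsub t ht] at this
    obtain ⟨s, hs, hse⟩ := this
    rw [← hi ⟨hs.1, hs.2.trans ht.2⟩ (hκm _) hse]
    exact hs.2
  have hκa : ∀ y, h (κ y) ∈ connHull c a := fun y => himg ▸ mem_image_of_mem h (hκm y)
  have hκy : ∀ y, h (κ y) ∈ connHull c y := fun y => (hκi y _ (hκm y)).2 le_rfl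
  have hpos : ∀ x ∈ X, 0 < κ x := by
    intro x hx
    have hcn : c ∉ connHull x a := fun hm => hc (connHull_subset hX hx ha hm)
    have hev : ∀ᶠ t in 𝓝[>] (0 : ℝ), h t ∉ connHull x a :=
      nhdsWithin_le_nhds <| hh.continuousAt.eventually (p := fun w => w ∉ connHull x a)
        ((hT.isCompact_connHull x a).isClosed.isOpen_compl.mem_nhds (by rwa [h0]))
    obtain ⟨t, hta, ht⟩ := (hev.and (Ioo_mem_nhdsGT zero_lt_one)).exists
    have ht1 : t ∈ Icc (0 : ℝ) 1 := ⟨ht.1.le, ht.2.le⟩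
    have hm : h t ∈ connHull c a := himg ▸ mem_image_of_mem h ht1
    exact ht.1.trans_le
      ((hκi x t ht1).1 ((hT.connHull_subset_union _ _ x hm).resolve_right hta))
  have hτ : ∀ e ∈ E, ∀ᶠ τ in 𝓝[>] (0 : ℝ),
      ∀ x ∈ X, x ∈ connHull c e → κ x < τ → x ∈ connHull c a := by
    intro e _
    by_cases he : 0 < κ e
    · filter_upwards [Ioo_mem_nhdsGT he] with τ hτ x hx hxe hxτ
      rcases hT.mem_connHull_or hxe (hκy e) with hm | hm
      · exact hT.connHull_subset_connHull left_mem_connHull (hκa e) hm.1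
      · have := (hκi x _ (hκm e)).1 hm.1
        linarith [hτ.2]
    · refine .of_forall fun τ x hx hxe _ => absurd (hpos x hx)
        (not_lt.2 (le_trans ?_ (not_lt.1 he)))
      exact (hκi e _ (hκm x)).1
        (hT.connHull_subset_connHull left_mem_connHull hxe (hκy x))
  obtain ⟨τ, hτE, hτ0, hτ1⟩ := (((Finset.eventually_all E).2 hτ).and
    (Ioo_mem_nhdsGT zero_lt_one)).exists
  have hinv : ∀ x ∈ X, κ x < τ → h (κ x) = x := by
    intro x hx hxτ
    obtain ⟨e, he, hxe⟩ := hcov c x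
    have hm := hτE e he x hx hxe hxτ
    rw [← himg] at hm
    obtain ⟨t, ht, rfl⟩ := hm
    rw [hκh t ht]
  refine ⟨h, κ, τ, hτ0, hh, hκ, h0, ?_, hpos, fun t ht => ?_, hinv, fun x y hx hxτ hxy hxa => ?_⟩
  · rw [← h0, hκh 0 (by simp)]
  · have ht1 : t ∈ Icc (0 : ℝ) 1 := ⟨ht.1.le, (ht.2.trans hτ1).le⟩
    have hm : h t ∈ connHull c a := himg ▸ mem_image_of_mem h ht1
    refine ⟨(connHull_subset_insert hX ha hcX hm).resolve_left fun heq => ?_, hκh t ht1⟩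
    exact ht.1.ne (hi (by simp) ht1 (h0.trans heq.symm))
  · have hxz : x ∈ connHull c (h (κ y)) := by
      rw [hsub _ (hκm y)]
      exact ⟨κ x, ⟨(hκm x).1, hxy.le⟩, hinv x hx hxτ⟩
    have hne : x ≠ h (κ y) := by
      intro heq
      have := hκh _ (hκm y)
      rw [← heq] at this
      exact hxy.ne this
    rcases hT.connHull_subset_union _ _ (h (κ y)) hxa with hm | hm
    · rw [connHull_comm] at hm
      exact hne (hT.eq_of_mem_connHull (hκa y) hxz hm)
    · exact hne (hT.eq_of_mem_connHull (hκy y) hxz hm)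

/-- If the points of an invariant connected set that are close to a fixed point `c` of its closure
stay close to `c`, and the set contains no periodic points, then all its points get close to `c`. -/
lemma exists_iterate_lt (hT : IsTreeSpace T) {g : T → T} (hg : Continuous g) {X : Set T}
    (hX : IsPreconnected X) (hgX : MapsTo g X X) (hper : ∀ x ∈ X, ∀ q, 1 ≤ q → g^[q] x ≠ x)
    {c : T} (hgc : g c = c) (hcX : c ∈ closure X) {κ : T → ℝ} (hκ : Continuous κ) {σ : ℝ}
    (hcσ : κ c < σ) (hdec : ∀ x ∈ X, κ x < σ → κ (g x) < σ) {x : T} (hx : x ∈ X) :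
    ∃ n, κ (g^[n] x) < σ := by
  by_contra! hcon
  obtain ⟨E, -, hcov⟩ := hT.exists_finset_cover
  have hgn : ∀ n, ∀ y ∈ X, g^[n] y ∈ X := fun n => hgX.iterate n
  set G : Set T := {y | ∀ n, σ ≤ κ (g^[n] y)} with hG
  have hGc : IsClosed G := by
    rw [hG, ofPred_forall]
    exact isClosed_iInter fun n => isClosed_le continuous_const (hκ.comp (hg.iterate n))
  have hcG : c ∉ G := fun h => not_le.2 hcσ (h 0)
  let F : Set T := {b | b ∈ X ∧ b ∈ G ∧ ∀ y ∈ connHull c b, y ∈ G → y = b}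
  have hFne : F.Nonempty := by
    obtain ⟨h, hh, rfl, rfl, -, hsub⟩ := hT.exists_param c x
    obtain ⟨t, ⟨ht, htG⟩, hmin⟩ :=
      ((isCompact_Icc (a := (0 : ℝ)) (b := 1)).inter_right (hGc.preimage hh)).exists_isLeast
        ⟨1, by simp, hcon⟩
    refine ⟨h t, ?_, htG, ?_⟩
    · have hm : h t ∈ connHull (h 0) (h 1) := by
        rw [hsub 0 (by simp) 1 (by simp), uIcc_of_le zero_le_one]
        exact mem_image_of_mem h ht
      refine (connHull_subset_insert hX hx hcX hm).resolve_left fun heq => ?_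
      exact hcG (heq ▸ htG)
    · rw [hsub 0 (by simp) t ht, uIcc_of_le ht.1]
      rintro _ ⟨s, hs, rfl⟩ hsG
      rw [le_antisymm hs.2 (hmin ⟨⟨hs.1, hs.2.trans ht.2⟩, hsG⟩)]
  have hFfin : F.Finite := by
    refine Set.Finite.subset (s := ⋃ e ∈ E, F ∩ connHull c e)
      (E.finite_toSet.biUnion fun e _ => Set.Subsingleton.finite ?_) fun b hb => ?_
    · rintro b ⟨hb, hbe⟩ b' ⟨hb', hbe'⟩
      rcases hT.mem_connHull_or hbe hbe' with hm | hm
      · exact hb'.2.2 b hm.1 hb.2.1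
      · exact (hb.2.2 b' hm.1 hb'.2.1).symm
    · obtain ⟨e, he, hbe⟩ := hcov c b
      exact mem_biUnion (show e ∈ (E : Set T) from he) ⟨hb, hbe⟩
  have hgF : MapsTo g F F := by
    rintro b ⟨hbX, hbG, hb⟩
    refine ⟨hgX hbX, fun n => ?_, fun y hy hyG => ?_⟩
    · rw [← Function.iterate_succ_apply]
      exact hbG _
    · obtain ⟨v, hv, rfl⟩ := connHull_subset
        ((hT.isPreconnected_connHull c b).image g hg.continuousOn)
        ⟨c, left_mem_connHull, hgc⟩ (mem_image_of_mem g right_mem_connHull) hy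
      by_contra hne
      have hvG : v ∉ G := fun hvG => hne (congrArg g (hb v hv hvG))
      have hvX : v ∈ X := (connHull_subset_insert hX hbX hcX hv).resolve_left fun heq =>
        hcG (by rwa [heq, hgc] at hyG)
      simp only [hG, mem_ofPred_eq, not_forall, not_le] at hvG
      obtain ⟨n, hn⟩ := hvG
      refine not_le.2 (hdec _ (hgn n v hvX) hn) ?_
      rw [← Function.iterate_succ_apply' g, Function.iterate_succ_apply]
      exact hyG n
  obtain ⟨b, hb⟩ := hFne
  obtain ⟨i, j, hij, hijb⟩ := Set.Finite.exists_lt_map_eq_of_forall_mem (t := F)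
    (f := fun n => g^[n] b) (fun n => hgF.iterate n hb) hFfin
  refine hper (g^[i] b) (hgn i b hb.1) (j - i) (by omega) ?_
  rw [← Function.iterate_add_apply, Nat.sub_add_cancel hij.le]
  exact hijb.symm

/-- A subcontinuum that meets its image shrinks to a fixed point if the union of its images
contains no periodic point. -/
lemma exists_tendsto_singleton (hT : IsTreeSpace T) {g : T → T} (hg : Continuous g) {B : Set T}
    (hB : IsCompact B) (hBc : IsConnected B) (hint : (B ∩ g '' B).Nonempty)
    (hper : ∀ n, ∀ x ∈ g^[n] '' B, ∀ q, 1 ≤ q → g^[q] x ≠ x) :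
    ∃ c, Tendsto (fun n => hausdorffDist (g^[n] '' B) {c}) atTop (𝓝 0) := by
  set X : Set T := ⋃ n, g^[n] '' B with hXdef
  have hX : IsPreconnected X := by
    refine IsPreconnected.iUnion_of_chain (fun n =>
      hBc.isPreconnected.image _ (hg.iterate n).continuousOn) fun n => ?_
    obtain ⟨w, hw, hw'⟩ := hint
    refine ⟨g^[n] w, mem_image_of_mem _ hw, ?_⟩
    rw [Nat.succ_eq_succ, Function.iterate_succ, image_comp]
    exact mem_image_of_mem _ hw'
  have hBX : ∀ n, ∀ y ∈ B, g^[n] y ∈ X := fun n y hy =>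
    mem_iUnion.2 ⟨n, mem_image_of_mem _ hy⟩
  have hgX : MapsTo g X X := by
    intro x hx
    obtain ⟨n, y, hy, rfl⟩ := mem_iUnion.1 hx
    rw [← Function.iterate_succ_apply' g]
    exact hBX _ y hy
  have hgn : ∀ n, ∀ y ∈ X, g^[n] y ∈ X := fun n => hgX.iterate n
  have hperX : ∀ x ∈ X, ∀ q, 1 ≤ q → g^[q] x ≠ x := fun x hx => by
    obtain ⟨n, hn⟩ := mem_iUnion.1 hx
    exact hper n x hn
  obtain ⟨a, haB⟩ := hBc.nonempty
  have ha : a ∈ X := hBX 0 a haB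
  obtain ⟨c, hgc, hcX, hcM⟩ := hT.exists_fixed_closure hg hX hgX
    (fun x hx => hperX x hx 1 le_rfl) ha
  have hcl : c ∈ closure X := closure_mono inter_subset_left hcM
  obtain ⟨h, κ, τ, hτ, hh, hκ, h0, hκc, hpos, hmem, hinv, hback⟩ :=
    hT.exists_end_coord hX ha hcl hcX
  have hne : ∀ x ∈ X, κ x < τ → κ (g x) ≠ κ x := fun x hx hxτ heq => by
    refine hperX x hx 1 le_rfl ?_
    rw [Function.iterate_one, ← hinv (g x) (hgX hx) (heq ▸ hxτ), heq, hinv x hx hxτ]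
  obtain ⟨x₁, hx₁τ, hx₁, hx₁a⟩ := mem_closure_iff.1 hcM {x | κ x < τ}
    (isOpen_lt hκ continuous_const) (by simpa [hκc] using hτ)
  have hx₁g : κ (g x₁) < κ x₁ := by
    refine lt_of_le_of_ne (not_lt.1 fun hlt => ?_) (hne x₁ hx₁ hx₁τ)
    exact hback x₁ (g x₁) hx₁ hx₁τ hlt hx₁a
  have hdec : ∀ x ∈ X, κ x < τ → κ (g x) < κ x := by
    intro x hx hxτ
    by_contra hle
    obtain ⟨t, ht, hte⟩ := (isPreconnected_Ioo (a := (0 : ℝ)) (b := τ)).intermediate_value₂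
      (f := fun t => κ (g (h t))) (g := fun t => t)
      (show κ x₁ ∈ Ioo 0 τ from ⟨hpos x₁ hx₁, hx₁τ⟩) (show κ x ∈ Ioo 0 τ from ⟨hpos x hx, hxτ⟩)
      (by fun_prop) continuousOn_id
      (by rw [hinv x₁ hx₁ hx₁τ]; exact hx₁g.le) (by rw [hinv x hx hxτ]; exact not_lt.1 hle)
    obtain ⟨hmX, hκt⟩ := hmem t ht
    exact hne (h t) hmX (by rw [hκt]; exact ht.2) (hte.trans hκt.symm)
  refine ⟨c, Metric.tendsto_nhds.2 fun ε hε => ?_⟩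
  obtain ⟨δ, hδ, hδε⟩ := Metric.continuousAt_iff.1 (hh.continuousAt (x := 0)) (ε / 2) (half_pos hε)
  have hσ : 0 < min δ τ := lt_min hδ hτ
  have hdecσ : ∀ x ∈ X, κ x < min δ τ → κ (g x) < min δ τ := fun x hx hlt =>
    (hdec x hx (hlt.trans_le (min_le_right _ _))).trans hlt
  have hstay : ∀ m, ∀ x ∈ X, κ x < min δ τ → κ (g^[m] x) < min δ τ := by
    intro m x hx hlt
    induction m with
    | zero => exact hlt
    | succ m ih =>
      rw [Function.iterate_succ_apply']
      exact hdecσ _ (hgn m x hx) ih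
  obtain ⟨s, hs⟩ := hB.elim_finite_subcover (fun n => {y | κ (g^[n] y) < min δ τ})
    (fun n => isOpen_lt (hκ.comp (hg.iterate n)) continuous_const) fun y hy => by
      obtain ⟨n, hn⟩ := hT.exists_iterate_lt hg hX hgX hperX hgc hcl hκ (hκc.trans_lt hσ) hdecσ
        (hBX 0 y hy)
      exact mem_iUnion.2 ⟨n, hn⟩
  filter_upwards [eventually_ge_atTop (s.sup id)] with n hn
  have hdist : ∀ y ∈ B, dist (g^[n] y) c ≤ ε / 2 := by
    intro y hy
    obtain ⟨i, hi, hiy⟩ := mem_iUnion₂.1 (hs hy)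
    have hin : i ≤ n := (Finset.le_sup (f := id) hi).trans hn
    have hlt : κ (g^[n] y) < min δ τ := by
      rw [← Nat.sub_add_cancel hin, Function.iterate_add_apply]
      exact hstay _ _ (hBX i y hy) hiy
    have hyX := hBX n y hy
    rw [← hinv _ hyX (hlt.trans_le (min_le_right _ _)), ← h0]
    refine (hδε ?_).le
    rw [Real.dist_0_eq_abs, abs_of_pos (hpos _ hyX)]
    exact hlt.trans_le (min_le_left _ _)
  rw [Real.dist_0_eq_abs, abs_of_nonneg hausdorffDist_nonneg]
  refine (hausdorffDist_le_of_mem_dist (half_pos hε).le ?_ ?_).trans_lt (half_lt_self hε)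
  · rintro _ ⟨y, hy, rfl⟩
    exact ⟨c, rfl, hdist y hy⟩
  · rintro _ rfl
    refine ⟨g^[n] a, mem_image_of_mem _ haB, ?_⟩
    rw [dist_comm]
    exact hdist a haB

lemma asympPeriodic_of_no_periodic (hT : IsTreeSpace T) {f : T → T} (hf : Continuous f)
    {A : Set T} (hA : IsSubcontinuum A)
    (hper : ∀ n, ∀ x ∈ f^[n] '' A, ∀ q, 1 ≤ q → f^[q] x ≠ x)
    (hd : ¬ Tendsto (fun n => diam (f^[n] '' A)) atTop (𝓝 0)) : AsympPeriodic f A := by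
  have := hT.compact
  obtain ⟨m, n, hmn, w, hwm, hwn⟩ := hT.exists_lt_inter_nonempty
    (fun n => hA.2.2.isPreconnected.image _ (hf.iterate n).continuousOn) hd
  obtain ⟨r, rfl⟩ := Nat.exists_eq_add_of_lt hmn
  have hg := hf.iterate (r + 1)
  have hint : (((f^[r + 1])^[m] '' A) ∩ f^[r + 1] '' ((f^[r + 1])^[m] '' A)).Nonempty := by
    obtain ⟨y, hy, hyw⟩ := hwm
    obtain ⟨z, hz, hzw⟩ := hwn
    refine ⟨f^[r * m] w, ⟨y, hy, ?_⟩, _, ⟨z, hz, rfl⟩, ?_⟩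
    · rw [← hyw, ← Function.iterate_mul, ← Function.iterate_add_apply]
      congr 1; ring
    · rw [← hzw, ← Function.iterate_mul, ← Function.iterate_add_apply,
        ← Function.iterate_add_apply]
      congr 1; ring
  obtain ⟨c, hc⟩ := hT.exists_tendsto_singleton hg (hA.2.1.image (hg.iterate m))
    (hA.2.2.image _ (hg.iterate m).continuousOn) hint fun n x hx q hq => by
      rw [← image_comp, ← Function.iterate_add, ← Function.iterate_mul] at hx
      rw [← Function.iterate_mul]
      exact hper _ x hx _ (Nat.mul_pos r.succ_pos hq)
  refine AsympPeriodic.of_iterate (Nat.succ_le_succ r.zero_le)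
    (AsympPeriodic.of_image_iterate hg hA.1 (k := m) ⟨1, le_rfl, {c}, singleton_nonempty c,
      isCompact_singleton, ?_⟩)
  simpa only [one_mul] using hc

end IsTreeSpace

end NoPeriodic

/-- every subcontinuum of a tree is asymptotically periodic or
asymptotically degenerate. -/
theorem asympPeriodic_or_asympDegenerate {T : Type*} [MetricSpace T]
    (hT : IsTreeSpace T) (f : T → T) (hf : Continuous f) :
    ∀ A : Set T, IsSubcontinuum A →
      AsympPeriodic f A ∨
        Tendsto (fun n : ℕ => diam (f^[n] '' A)) atTop (𝓝 0) := by
  intro A hA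
  by_cases hper : ∀ n, ∀ x ∈ f^[n] '' A, ∀ q, 1 ≤ q → f^[q] x ≠ x
  · exact or_iff_not_imp_right.2 fun hd => hT.asympPeriodic_of_no_periodic hf hA hper hd
  · push Not at hper
    obtain ⟨n, c, hc, q, hq, hfc⟩ := hper
    exact Or.inl (hT.asympPeriodic_of_periodic hf hA hq hc hfc)
end

section
/- Let f : T → T be a continuous map of a tree T, and let F : Con(T) → Con(T) be the induced map on the hyperspace of subcontinua with the Hausdorff metric, F(A) = f(A). Then the topological entropies coincide: h(F) = h(f). -/
open Set Filter Metric Topology TopologicalSpace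

section Arcs

variable {T : Type*} [MetricSpace T]

/-- `A` is a possibly degenerate arc from `x` to `y`, parametrised injectively by an interval. -/
def IsParamArc (A : Set T) (x y : T) : Prop :=
  ∃ (b : ℝ) (φ : ℝ → T), 0 ≤ b ∧ ContinuousOn φ (Icc 0 b) ∧ InjOn φ (Icc 0 b) ∧
    φ 0 = x ∧ φ b = y ∧ φ '' Icc 0 b = A

theorem isParamArc_image_Icc {φ : ℝ → T} {s t : ℝ} (hst : s ≤ t)
    (hc : ContinuousOn φ (Icc s t)) (hi : InjOn φ (Icc s t)) :
    IsParamArc (φ '' Icc s t) (φ s) (φ t) := by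
  have him : (fun u => s + u) '' Icc 0 (t - s) = Icc s t := by
    rw [Set.image_const_add_Icc]; simp
  refine ⟨t - s, φ ∘ fun u => s + u, by linarith, ?_, ?_, by simp, by simp, ?_⟩
  · exact hc.comp (by fun_prop) (fun u hu => him ▸ mem_image_of_mem _ hu)
  · exact hi.comp (fun a _ b _ h => by simpa using h) (fun u hu => him ▸ mem_image_of_mem _ hu)
  · rw [image_comp, him]

theorem isParamArc_image_Icc_symm {φ : ℝ → T} {s t : ℝ} (hst : s ≤ t)
    (hc : ContinuousOn φ (Icc s t)) (hi : InjOn φ (Icc s t)) :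
    IsParamArc (φ '' Icc s t) (φ t) (φ s) := by
  have him : (fun u => t - u) '' Icc 0 (t - s) = Icc s t := by
    rw [Set.image_const_sub_Icc]; simp
  refine ⟨t - s, φ ∘ fun u => t - u, by linarith, ?_, ?_, by simp, by simp, ?_⟩
  · exact hc.comp (by fun_prop) (fun u hu => him ▸ mem_image_of_mem _ hu)
  · exact hi.comp (fun a _ b _ h => by simpa using h) (fun u hu => him ▸ mem_image_of_mem _ hu)
  · rw [image_comp, him]

theorem isParamArc_singleton (x : T) : IsParamArc {x} x x :=
  ⟨0, fun _ => x, le_rfl, continuousOn_const, by simp, rfl, rfl, by simp⟩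

theorem IsParamArc.symm {A : Set T} {x y : T} (h : IsParamArc A x y) : IsParamArc A y x := by
  obtain ⟨b, φ, hb, hc, hi, rfl, rfl, rfl⟩ := h
  exact isParamArc_image_Icc_symm hb hc hi

theorem IsArcBetween.isParamArc {A : Set T} {x y : T} (h : IsArcBetween A x y) :
    IsParamArc A x y := by
  obtain ⟨e, rfl, rfl⟩ := h
  refine ⟨1, fun t => e (projIcc 0 1 zero_le_one t), zero_le_one, ?_, ?_, ?_, ?_, ?_⟩
  · exact (continuous_subtype_val.comp (e.continuous.comp continuous_projIcc)).continuousOn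
  · intro a ha b hb hab
    have := e.injective (Subtype.ext hab)
    rw [projIcc_of_mem _ ha, projIcc_of_mem _ hb] at this
    exact congrArg Subtype.val this
  · simp [projIcc_left]
  · simp [projIcc_right]
  · ext z
    constructor
    · rintro ⟨t, -, rfl⟩
      exact Subtype.coe_prop _
    · intro hz
      refine ⟨e.symm ⟨z, hz⟩, (e.symm ⟨z, hz⟩).2, ?_⟩
      simp

theorem IsParamArc.isArcBetween {A : Set T} {x y : T} (h : IsParamArc A x y) (hxy : x ≠ y) :
    IsArcBetween A x y := by
  obtain ⟨b, φ, hb, hc, hi, rfl, rfl, rfl⟩ := h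
  have hb0 : 0 < b := hb.lt_of_ne (by rintro rfl; exact hxy rfl)
  have hm : ∀ t : Icc (0 : ℝ) 1, b * t ∈ Icc 0 b := fun t =>
    ⟨mul_nonneg hb t.2.1, mul_le_of_le_one_right hb t.2.2⟩
  let g : Icc (0 : ℝ) 1 → φ '' Icc 0 b := fun t => ⟨φ (b * t), _, hm t, rfl⟩
  have hg : Continuous g := by
    refine Continuous.subtype_mk ?_ _
    exact hc.comp_continuous (by fun_prop) hm
  have hbij : Function.Bijective g := by
    constructor
    · intro s t hst
      have := hi (hm s) (hm t) (congrArg Subtype.val hst)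
      exact Subtype.ext (mul_left_cancel₀ hb0.ne' this)
    · rintro ⟨_, t, ht, rfl⟩
      refine ⟨⟨t / b, div_nonneg ht.1 hb, (div_le_one hb0).2 ht.2⟩, ?_⟩
      apply Subtype.ext
      simp only [g]
      congr 1
      field_simp
  refine ⟨Continuous.homeoOfEquivCompactToT2 (f := Equiv.ofBijective g hbij) hg, ?_, ?_⟩
  · change φ (b * 0) = _
    simp
  · change φ (b * 1) = _
    simp

theorem IsParamArc.left_mem {A : Set T} {x y : T} (h : IsParamArc A x y) : x ∈ A := by
  obtain ⟨b, φ, hb, hc, hi, rfl, rfl, rfl⟩ := h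
  exact mem_image_of_mem _ (left_mem_Icc.2 hb)

theorem IsParamArc.right_mem {A : Set T} {x y : T} (h : IsParamArc A x y) : y ∈ A :=
  h.symm.left_mem

theorem IsParamArc.isCompact {A : Set T} {x y : T} (h : IsParamArc A x y) : IsCompact A := by
  obtain ⟨b, φ, hb, hc, hi, rfl, rfl, rfl⟩ := h
  exact isCompact_Icc.image_of_continuousOn hc

theorem IsParamArc.isPreconnected {A : Set T} {x y : T} (h : IsParamArc A x y) :
    IsPreconnected A := by
  obtain ⟨b, φ, hb, hc, hi, rfl, rfl, rfl⟩ := h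
  exact isPreconnected_Icc.image _ hc

/-- Two arcs with a common endpoint can be concatenated inside their union. -/
theorem IsParamArc.exists_trans {A B : Set T} {x y z : T} (hA : IsParamArc A x y)
    (hB : IsParamArc B y z) : ∃ C ⊆ A ∪ B, IsParamArc C x z := by
  have hBc : IsClosed B := hB.isCompact.isClosed
  have hyB := hB.left_mem
  obtain ⟨a, φ, ha, hφc, hφi, rfl, hφa, rfl⟩ := hA
  obtain ⟨b, ψ, hb, hψc, hψi, hψ0, rfl, rfl⟩ := hB
  have hK : IsCompact (Icc 0 a ∩ φ ⁻¹' (ψ '' Icc 0 b)) :=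
    isCompact_Icc.of_isClosed_subset (hφc.preimage_isClosed_of_isClosed isClosed_Icc hBc)
      inter_subset_left
  obtain ⟨s, ⟨hs, t, ht, hts⟩, hmin⟩ := hK.exists_isLeast
    ⟨a, right_mem_Icc.2 ha, by simpa [hφa] using hyB⟩
  have hdisj : ∀ u ∈ Icc 0 a, u < s → φ u ∉ ψ '' Icc 0 b := fun u hu hus hmem =>
    absurd (hmin ⟨hu, hmem⟩) (not_le.2 hus)
  let χ : ℝ → T := fun u => if u ≤ s then φ u else ψ (t + (u - s))
  have hχ1 : ∀ u, u ≤ s → χ u = φ u := fun u hu => if_pos hu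
  have hχ2 : ∀ u, s ≤ u → χ u = ψ (t + (u - s)) := by
    intro u hu
    rcases hu.eq_or_lt with rfl | hu
    · simp [χ, hts]
    · simp [χ, not_le.2 hu]
  have hsub1 : Icc 0 s ⊆ Icc 0 a := Icc_subset_Icc_right hs.2
  have hmaps : ∀ u ∈ Icc s (s + (b - t)), t + (u - s) ∈ Icc 0 b := fun u hu =>
    ⟨by linarith [hu.1, ht.1], by linarith [hu.2]⟩
  have hst : s ≤ s + (b - t) := by linarith [ht.2]
  have hun : Icc 0 (s + (b - t)) = Icc 0 s ∪ Icc s (s + (b - t)) :=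
    (Icc_union_Icc_eq_Icc hs.1 hst).symm
  have hχc : ContinuousOn χ (Icc 0 (s + (b - t))) := by
    rw [hun]
    refine ContinuousOn.union_of_isClosed ?_ ?_ isClosed_Icc isClosed_Icc
    · exact (hφc.mono hsub1).congr fun u hu => hχ1 u hu.2
    · exact (hψc.comp (by fun_prop) hmaps).congr fun u hu => hχ2 u hu.1
  have hχi : InjOn χ (Icc 0 (s + (b - t))) := by
    have key : ∀ u ∈ Icc 0 (s + (b - t)), ∀ v ∈ Icc 0 (s + (b - t)), u ≤ v → χ u = χ v →
        u = v := by
      intro u hu v hv huv h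
      rcases le_or_gt v s with hvs | hvs
      · rw [hχ1 u (huv.trans hvs), hχ1 v hvs] at h
        exact hφi (hsub1 ⟨hu.1, huv.trans hvs⟩) (hsub1 ⟨hv.1, hvs⟩) h
      · have hv' := hmaps v ⟨hvs.le, hv.2⟩
        rcases lt_or_ge u s with hus | hus
        · rw [hχ1 u hus.le, hχ2 v hvs.le] at h
          exact absurd ⟨_, hv', h.symm⟩ (hdisj u (hsub1 ⟨hu.1, hus.le⟩) hus)
        · rw [hχ2 u hus, hχ2 v hvs.le] at h
          have := hψi (hmaps u ⟨hus, hu.2⟩) hv' h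
          linarith
    intro u hu v hv h
    rcases le_total u v with huv | huv
    · exact key u hu v hv huv h
    · exact (key v hv u hu huv h.symm).symm
  have harc := isParamArc_image_Icc (hs.1.trans hst) hχc hχi
  rw [hχ1 0 hs.1, hχ2 _ hst] at harc
  refine ⟨_, ?_, by simpa using harc⟩
  rw [hun, image_union]
  apply union_subset_union
  · rintro _ ⟨u, hu, rfl⟩
    exact ⟨u, hsub1 hu, (hχ1 u hu.2).symm⟩
  · rintro _ ⟨u, hu, rfl⟩
    exact ⟨_, hmaps u hu, (hχ2 u hu.1).symm⟩

theorem IsParamArc.eventually_notMem {A : Set T} {x y w z : T} (hA : IsParamArc A x y)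
    (hwz : w ≠ z) :
    ∀ᶠ w' in 𝓝 w, w ∈ A → w' ∈ A → ∃ B, z ∉ B ∧ IsParamArc B w w' := by
  by_cases hwA : w ∈ A
  swap
  · exact Eventually.of_forall fun _ h => absurd h hwA
  obtain ⟨b, φ, hb, hc, hi, rfl, rfl, rfl⟩ := hA
  obtain ⟨t, ht, rfl⟩ := hwA
  have harc : ∀ s ∈ Icc 0 b, IsParamArc (φ '' uIcc t s) (φ t) (φ s) := by
    intro s hs
    have hsub : uIcc t s ⊆ Icc 0 b := uIcc_subset_Icc ht hs
    rcases le_total t s with h | h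
    · rw [uIcc_of_le h] at hsub ⊢
      exact isParamArc_image_Icc h (hc.mono hsub) (hi.mono hsub)
    · rw [uIcc_of_ge h] at hsub ⊢
      exact isParamArc_image_Icc_symm h (hc.mono hsub) (hi.mono hsub)
  by_cases hz : z ∈ φ '' Icc 0 b
  · obtain ⟨c, hcm, rfl⟩ := hz
    have hcl : IsClosed {s : ℝ | c ∈ uIcc t s} := by
      simp only [mem_uIcc, ofPred_or]
      refine IsClosed.union ?_ ?_
      · exact (isClosed_const.inter isClosed_Ici : IsClosed ({_s : ℝ | t ≤ c} ∩ {s | c ≤ s}))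
      · exact (isClosed_Iic.inter isClosed_const : IsClosed ({s : ℝ | s ≤ c} ∩ {_s | c ≤ t}))
    have hK : IsCompact (Icc 0 b ∩ {s : ℝ | c ∈ uIcc t s}) := isCompact_Icc.inter_right hcl
    have himg := (hK.image_of_continuousOn (hc.mono inter_subset_left)).isClosed
    have hnot : φ t ∉ φ '' (Icc 0 b ∩ {s : ℝ | c ∈ uIcc t s}) := by
      rintro ⟨s, ⟨hs, hs'⟩, hst⟩
      obtain rfl := hi hs ht hst
      rw [mem_ofPred_eq, uIcc_self, mem_singleton_iff] at hs'
      exact hwz (by rw [hs'])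
    filter_upwards [himg.isOpen_compl.mem_nhds hnot] with w' hw' _ hw'A
    obtain ⟨s, hs, rfl⟩ := hw'A
    refine ⟨_, ?_, harc s hs⟩
    rintro ⟨u, hu, huc⟩
    obtain rfl := hi (uIcc_subset_Icc ht hs hu) hcm huc
    exact hw' ⟨s, ⟨hs, hu⟩, rfl⟩
  · filter_upwards with w' _ hw'A
    obtain ⟨s, hs, rfl⟩ := hw'A
    exact ⟨_, fun h => hz (image_mono (uIcc_subset_Icc ht hs) h), harc s hs⟩

end Arcs

section Tree

variable {T : Type*} [MetricSpace T]

theorem isParamArc_treeArc (hT : IsTreeSpace T) (x y : T) : IsParamArc (treeArc hT x y) x y := by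
  unfold treeArc
  split_ifs with h
  · subst h
    exact isParamArc_singleton x
  · exact (hT.uniqueArc x y h).choose_spec.1.isParamArc

theorem IsParamArc.eq_treeArc (hT : IsTreeSpace T) {A : Set T} {x y : T}
    (h : IsParamArc A x y) : A = treeArc hT x y := by
  unfold treeArc
  split_ifs with hxy
  · subst hxy
    obtain ⟨b, φ, hb, hc, hi, rfl, h1, rfl⟩ := h
    obtain rfl := hi (right_mem_Icc.2 hb) (left_mem_Icc.2 hb) h1
    simp
  · exact (hT.uniqueArc x y hxy).choose_spec.2 A (h.isArcBetween hxy)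

theorem treeArc_comm (hT : IsTreeSpace T) (x y : T) : treeArc hT x y = treeArc hT y x :=
  (isParamArc_treeArc hT x y).symm.eq_treeArc hT

theorem left_mem_treeArc (hT : IsTreeSpace T) (x y : T) : x ∈ treeArc hT x y :=
  (isParamArc_treeArc hT x y).left_mem

theorem right_mem_treeArc (hT : IsTreeSpace T) (x y : T) : y ∈ treeArc hT x y :=
  (isParamArc_treeArc hT x y).right_mem

theorem treeArc_subset_union (hT : IsTreeSpace T) (x y z : T) :
    treeArc hT x z ⊆ treeArc hT x y ∪ treeArc hT y z := by
  obtain ⟨C, hC, h⟩ := (isParamArc_treeArc hT x y).exists_trans (isParamArc_treeArc hT y z)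
  exact h.eq_treeArc hT ▸ hC

theorem IsTreeSpace.exists_finset_arcs (hT : IsTreeSpace T) :
    ∃ s : Finset (Set T), (∀ A ∈ s, ∃ x y, IsParamArc A x y) ∧
      ⋃₀ (s : Set (Set T)) = Set.univ := by
  rcases hT.finiteArcs with ⟨x, hx⟩ | ⟨s, hs, hu⟩
  · exact ⟨{{x}}, by simpa using ⟨x, x, isParamArc_singleton x⟩, by simp [hx]⟩
  · refine ⟨s, fun A hA => ?_, hu⟩
    obtain ⟨e⟩ := hs A hA
    exact ⟨_, _, IsArcBetween.isParamArc ⟨e, rfl, rfl⟩⟩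

theorem eventually_notMem_treeArc (hT : IsTreeSpace T) {w z : T} (hwz : w ≠ z) :
    ∀ᶠ w' in 𝓝 w, z ∉ treeArc hT w w' := by
  obtain ⟨s, hs, hu⟩ := hT.exists_finset_arcs
  have hclosed : ∀ A ∈ s, IsClosed A := fun A hA => by
    obtain ⟨x, y, h⟩ := hs A hA
    exact h.isCompact.isClosed
  have h1 : ∀ᶠ w' in 𝓝 w, ∀ A ∈ s, w ∈ A → w' ∈ A → ∃ B, z ∉ B ∧ IsParamArc B w w' := by
    rw [Finset.eventually_all]
    intro A hA
    obtain ⟨x, y, h⟩ := hs A hA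
    exact h.eventually_notMem hwz
  have h2 : ∀ᶠ w' in 𝓝 w, ∀ A ∈ s, w ∉ A → w' ∉ A := by
    rw [Finset.eventually_all]
    intro A hA
    by_cases hw : w ∈ A
    · exact Eventually.of_forall fun _ h => absurd hw h
    · filter_upwards [(hclosed A hA).isOpen_compl.mem_nhds hw] with w' hw' _ using hw'
  filter_upwards [h1, h2] with w' h1 h2
  obtain ⟨A, hA, hw'A⟩ : w' ∈ ⋃₀ (s : Set (Set T)) := hu ▸ mem_univ w'
  obtain ⟨B, hzB, hB⟩ := h1 A hA (by_contra fun h => h2 A hA h hw'A) hw'A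
  rwa [← hB.eq_treeArc hT]

/-- Connected subsets of a tree are arcwise convex. -/
theorem IsPreconnected.treeArc_subset (hT : IsTreeSpace T) {C : Set T} (hC : IsPreconnected C)
    {x y : T} (hx : x ∈ C) (hy : y ∈ C) : treeArc hT x y ⊆ C := by
  intro z hz
  by_contra hzC
  have hne : ∀ w ∈ C, w ≠ z := fun w hw h => hzC (h ▸ hw)
  have hU : IsOpen {w | z ∉ treeArc hT x w} := by
    rw [isOpen_iff_mem_nhds]
    intro w hw
    have hwz : w ≠ z := by
      rintro rfl
      exact hw (right_mem_treeArc hT x w)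
    filter_upwards [eventually_notMem_treeArc hT hwz] with w' hw' h
    exact (treeArc_subset_union hT x w w' h).elim hw hw'
  have hV : IsOpen {w | w ≠ z ∧ z ∈ treeArc hT x w} := by
    rw [isOpen_iff_mem_nhds]
    rintro w ⟨hwz, hw⟩
    filter_upwards [eventually_notMem_treeArc hT hwz, isOpen_ne.mem_nhds hwz] with w' hw' hne
    refine ⟨hne, ?_⟩
    rcases treeArc_subset_union hT x w' w hw with h | h
    · exact h
    · rw [treeArc_comm] at h
      exact absurd h hw'
  obtain ⟨w, -, hw1, -, hw2⟩ := hC _ _ hU hV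
    (fun w hw => (em (z ∈ treeArc hT x w)).symm.imp id fun h => ⟨hne w hw, h⟩)
    ⟨x, hx, fun h => by
      rw [← (isParamArc_singleton x).eq_treeArc hT] at h
      exact hne x hx h.symm⟩
    ⟨y, hy, hne y hy, hz⟩
  exact hw1 hw2

theorem treeArc_subset_of_mem (hT : IsTreeSpace T) {x y z : T} (hz : z ∈ treeArc hT x y) :
    treeArc hT x z ⊆ treeArc hT x y :=
  (isParamArc_treeArc hT x y).isPreconnected.treeArc_subset hT (left_mem_treeArc hT x y) hz

/-- The arcs from `x` to the points of a given arc issuing from `x` form a chain. -/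
theorem treeArc_subset_or_subset (hT : IsTreeSpace T) {x y z w : T}
    (hz : z ∈ treeArc hT x y) (hw : w ∈ treeArc hT x y) :
    treeArc hT x z ⊆ treeArc hT x w ∨ treeArc hT x w ⊆ treeArc hT x z := by
  have h := isParamArc_treeArc hT x y
  obtain ⟨b, φ, hb, hc, hi, rfl, rfl, hφ⟩ := h
  rw [← hφ] at hz hw
  have key : ∀ u ∈ Icc 0 b, φ '' Icc 0 u = treeArc hT (φ 0) (φ u) := fun u hu =>
    (isParamArc_image_Icc hu.1 (hc.mono (Icc_subset_Icc_right hu.2))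
      (hi.mono (Icc_subset_Icc_right hu.2))).eq_treeArc hT
  obtain ⟨u, hu, rfl⟩ := hz
  obtain ⟨v, hv, rfl⟩ := hw
  rw [← key u hu, ← key v hv]
  rcases le_total u v with h | h
  · exact Or.inl (image_mono (Icc_subset_Icc_right h))
  · exact Or.inr (image_mono (Icc_subset_Icc_right h))

/-- A tree is a finite union of arcs issuing from any given point. -/
theorem IsTreeSpace.exists_finset_endpoints (hT : IsTreeSpace T) :
    ∃ Q : Finset T, ∀ p x, ∃ q ∈ Q, x ∈ treeArc hT p q := by
  classical
  obtain ⟨s, hs, hu⟩ := hT.exists_finset_arcs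
  have := hT.conn.toNonempty
  choose! a b hab using hs
  refine ⟨s.image a ∪ s.image b, fun p x => ?_⟩
  obtain ⟨A, hA, hxA⟩ : x ∈ ⋃₀ (s : Set (Set T)) := hu ▸ mem_univ x
  rw [(hab A hA).eq_treeArc hT] at hxA
  rcases treeArc_subset_union hT (a A) p (b A) hxA with h | h
  · exact ⟨a A, by simp only [Finset.mem_union, Finset.mem_image]; exact Or.inl ⟨A, hA, rfl⟩,
      treeArc_comm hT p (a A) ▸ h⟩
  · exact ⟨b A, by simp only [Finset.mem_union, Finset.mem_image]; exact Or.inr ⟨A, hA, rfl⟩, h⟩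

theorem IsParamArc.exists_finset_mesh {A : Set T} {x y : T} (hA : IsParamArc A x y)
    {ε : ℝ} (hε : 0 < ε) :
    ∃ P : Finset T, ∀ u ∈ A, ∀ v ∈ A, (∀ B ⊆ A, IsParamArc B u v → Disjoint B P) →
      dist u v ≤ ε := by
  classical
  obtain ⟨b, φ, hb, hc, hi, rfl, rfl, rfl⟩ := hA
  obtain ⟨δ, hδ, hφ⟩ := Metric.uniformContinuousOn_iff.1
    (isCompact_Icc.uniformContinuousOn_of_continuous hc) ε hε
  obtain ⟨t, -, htf, ht⟩ := finite_cover_balls_of_compact (isCompact_Icc (a := (0 : ℝ)) (b := b))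
    (half_pos hδ)
  have key : ∀ u ∈ Icc 0 b, ∀ v ∈ Icc 0 b, u ≤ v →
      Disjoint (φ '' Icc u v) (htf.toFinset.image φ) → dist (φ u) (φ v) ≤ ε := by
    intro u hu v hv huv hd
    by_contra! h
    have hlt : δ ≤ v - u := by
      by_contra! h'
      refine (hφ u hu v hv ?_).not_ge h.le
      rwa [dist_comm, Real.dist_eq, abs_of_nonneg (by linarith)]
    obtain ⟨c, hc, hcu⟩ := mem_iUnion₂.1
      (ht (⟨by linarith [hu.1], by linarith [hv.2]⟩ : (u + v) / 2 ∈ Icc 0 b))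
    rw [mem_ball, Real.dist_eq, abs_lt] at hcu
    refine disjoint_left.1 hd (mem_image_of_mem φ (⟨?_, ?_⟩ : c ∈ Icc u v)) ?_
    · linarith [hcu.2]
    · linarith [hcu.1]
    · exact_mod_cast Finset.mem_image_of_mem φ (htf.mem_toFinset.2 hc)
  refine ⟨htf.toFinset.image φ, ?_⟩
  rintro _ ⟨u, hu, rfl⟩ _ ⟨v, hv, rfl⟩ hd
  rcases le_total u v with huv | huv
  · have hsub := Icc_subset_Icc hu.1 hv.2
    exact key u hu v hv huv
      (hd _ (image_mono hsub) (isParamArc_image_Icc huv (hc.mono hsub) (hi.mono hsub)))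
  · have hsub := Icc_subset_Icc hv.1 hu.2
    rw [dist_comm]
    exact key v hv u hu huv
      (hd _ (image_mono hsub) (isParamArc_image_Icc_symm huv (hc.mono hsub) (hi.mono hsub)))

/-- For each `ε > 0`, some finite set meets all connected sets of diameter greater than `ε`. -/
theorem IsTreeSpace.exists_finset_mesh (hT : IsTreeSpace T) {ε : ℝ} (hε : 0 < ε) :
    ∃ P : Finset T, ∀ C : Set T, IsPreconnected C → Disjoint C P →
      ∀ x ∈ C, ∀ y ∈ C, dist x y ≤ ε := by
  classical
  obtain ⟨p⟩ := hT.conn.toNonempty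
  obtain ⟨Q, hQ⟩ := hT.exists_finset_endpoints
  choose P hP using fun q => (isParamArc_treeArc hT p q).exists_finset_mesh (half_pos hε)
  refine ⟨Q.biUnion P, fun C hC hd x hx y hy => ?_⟩
  have key : ∀ q ∈ Q, ∀ u ∈ C, ∀ v ∈ C, u ∈ treeArc hT p q → v ∈ treeArc hT p q →
      dist u v ≤ ε / 2 := by
    intro q hq u hu v hv huq hvq
    refine hP q u huq v hvq fun B _ hB => ?_
    rw [hB.eq_treeArc hT]
    refine hd.mono (hC.treeArc_subset hT hu hv) ?_
    exact_mod_cast Finset.subset_biUnion_of_mem P hq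
  obtain ⟨m, hm, hmx, hmy⟩ := isPreconnected_closed_iff.1
    (isParamArc_treeArc hT x y).isPreconnected _ _
    (isParamArc_treeArc hT x p).isCompact.isClosed (isParamArc_treeArc hT p y).isCompact.isClosed
    (treeArc_subset_union hT x p y)
    ⟨x, left_mem_treeArc hT x y, left_mem_treeArc hT x p⟩
    ⟨y, right_mem_treeArc hT x y, right_mem_treeArc hT p y⟩
  rw [treeArc_comm] at hmx
  have hmC := hC.treeArc_subset hT hx hy hm
  obtain ⟨q, hq, hxq⟩ := hQ p x
  obtain ⟨r, hr, hyr⟩ := hQ p y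
  have h1 := key q hq x hx m hmC hxq (treeArc_subset_of_mem hT hxq hmx)
  have h2 := key r hr m hmC y hy (treeArc_subset_of_mem hT hyr hmy) hyr
  linarith [dist_triangle x m y]

end Tree

section Counting

open scoped Classical in
theorem Finset.card_le_of_isChain {α : Type*} {W : Finset α} {S : Finset (Finset α)}
    (hS : IsChain (· ⊆ ·) (S : Set (Finset α))) (hW : ∀ s ∈ S, s ⊆ W) :
    S.card ≤ W.card + 1 := by
  rw [← Finset.card_range (W.card + 1)]
  refine Finset.card_le_card_of_injOn Finset.card (fun s hs => ?_) fun s hs t ht h => ?_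
  · simpa [Nat.lt_succ_iff] using Finset.card_le_card (hW s hs)
  · rcases hS.total hs ht with hst | hst
    · exact Finset.eq_of_subset_of_card_le hst h.ge
    · exact (Finset.eq_of_subset_of_card_le hst h.le).symm

open scoped Classical in
theorem Finset.exists_representatives {α γ : Type*} (Γ : Finset γ) (R : α → γ → Prop)
    (h : ∀ a, ∃ c ∈ Γ, R a c) :
    ∃ t : Finset α, t.card ≤ Γ.card ∧ ∀ a, ∃ b ∈ t, ∃ c, R a c ∧ R b c := by
  rcases isEmpty_or_nonempty α with hα | hα
  · exact ⟨∅, by simp, fun a => isEmptyElim a⟩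
  · have : ∀ c, ∃ b, ∀ a, R a c → R b c := fun c => by
      by_cases hc : ∃ a, R a c
      · exact ⟨hc.choose, fun _ _ => hc.choose_spec⟩
      · exact ⟨Classical.arbitrary α, fun a ha => absurd ⟨a, ha⟩ hc⟩
    choose b hb using this
    refine ⟨Γ.image b, Finset.card_image_le, fun a => ?_⟩
    obtain ⟨c, hc, hac⟩ := h a
    exact ⟨b c, Finset.mem_image_of_mem b hc, c, hac, hb c a hac⟩

variable {T : Type*} [MetricSpace T]

open scoped Classical in
/-- The pairs `(c, j)` with `c ∈ D`, `j < n` such that `f^j(A)` meets the `r`-ball around `c`. -/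
noncomputable def hitSet (D : Finset T) (r : ℝ) (f : T → T) (n : ℕ) (A : Set T) :
    Finset (T × ℕ) :=
  {c ∈ D ×ˢ Finset.range n | ∃ x ∈ A, dist (f^[c.2] x) c.1 < r}

variable {D : Finset T} {r : ℝ} {f : T → T} {n : ℕ} {A B : Set T}

theorem mem_hitSet {c : T × ℕ} :
    c ∈ hitSet D r f n A ↔ (c.1 ∈ D ∧ c.2 < n) ∧ ∃ x ∈ A, dist (f^[c.2] x) c.1 < r := by
  simp [hitSet]

theorem hitSet_subset_product :
    hitSet D r f n A ⊆ D ×ˢ Finset.range n := by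
  classical
  exact Finset.filter_subset _ _

theorem hitSet_mono (h : A ⊆ B) : hitSet D r f n A ⊆ hitSet D r f n B := fun c hc => by
  rw [mem_hitSet] at hc ⊢
  exact ⟨hc.1, hc.2.imp fun x hx => ⟨h hx.1, hx.2⟩⟩

theorem exists_dist_lt_of_hitSet_eq (hD : ∀ x : T, ∃ c ∈ D, dist x c < r)
    (h : hitSet D r f n A = hitSet D r f n B) {j : ℕ} (hj : j < n) {x : T} (hx : x ∈ A) :
    ∃ y ∈ B, dist (f^[j] x) (f^[j] y) < 2 * r := by
  obtain ⟨c, hc, hxc⟩ := hD (f^[j] x)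
  have : (c, j) ∈ hitSet D r f n B := h ▸ mem_hitSet.2 ⟨⟨hc, hj⟩, x, hx, hxc⟩
  obtain ⟨-, y, hy, hyc⟩ := mem_hitSet.1 this
  exact ⟨y, hy, by linarith [dist_triangle_right (f^[j] x) (f^[j] y) c]⟩

open scoped Classical in
/-- The connected sets through a given point have only polynomially many orbit patterns. -/
theorem exists_finset_hitSet (hT : IsTreeSpace T) {Q : Finset T}
    (hQ : ∀ p x, ∃ q ∈ Q, x ∈ treeArc hT p q) (D : Finset T) (r : ℝ) (f : T → T) (n : ℕ)
    (p : T) :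
    ∃ G : Finset (Finset (T × ℕ)), G.card ≤ (D.card * n + 1) ^ Q.card ∧
      ∀ A : Set T, IsPreconnected A → p ∈ A → hitSet D r f n A ∈ G := by
  let S : T → Finset (Finset (T × ℕ)) := fun q =>
    {s ∈ (D ×ˢ Finset.range n).powerset | ∃ A : Set T, IsPreconnected A ∧ p ∈ A ∧
      s = hitSet D r f n (A ∩ treeArc hT p q)}
  have hnest : ∀ q, ∀ A B : Set T, IsPreconnected A → p ∈ A → IsPreconnected B → p ∈ B →
      A ∩ treeArc hT p q ⊆ B ∩ treeArc hT p q ∨ B ∩ treeArc hT p q ⊆ A ∩ treeArc hT p q := by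
    intro q A B hA hpA hB hpB
    by_contra! h
    obtain ⟨x, ⟨hxA, hxq⟩, hx⟩ := not_subset.1 h.1
    obtain ⟨y, ⟨hyB, hyq⟩, hy⟩ := not_subset.1 h.2
    rcases treeArc_subset_or_subset hT hxq hyq with h | h
    · exact hx ⟨hB.treeArc_subset hT hpB hyB (h (right_mem_treeArc hT p x)), hxq⟩
    · exact hy ⟨hA.treeArc_subset hT hpA hxA (h (right_mem_treeArc hT p y)), hyq⟩
  have hS : ∀ q, (S q).card ≤ D.card * n + 1 := by
    intro q
    have := Finset.card_le_of_isChain (W := D ×ˢ Finset.range n) (S := S q) ?_ ?_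
    · simpa using this
    · intro s hs t ht _
      obtain ⟨-, A, hA, hpA, rfl⟩ := Finset.mem_filter.1 (Finset.mem_coe.1 hs)
      obtain ⟨-, B, hB, hpB, rfl⟩ := Finset.mem_filter.1 (Finset.mem_coe.1 ht)
      exact (hnest q A B hA hpA hB hpB).imp hitSet_mono hitSet_mono
    · exact fun s hs => Finset.mem_powerset.1 (Finset.mem_filter.1 hs).1
  refine ⟨(Q.pi fun q => S q).image fun g => Q.attach.biUnion fun q => g q.1 q.2, ?_, ?_⟩
  · refine Finset.card_image_le.trans ?_
    rw [Finset.card_pi]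
    exact Finset.prod_le_pow_card _ _ _ fun q _ => hS q
  · intro A hA hpA
    refine Finset.mem_image.2 ⟨fun q _ => hitSet D r f n (A ∩ treeArc hT p q), ?_, ?_⟩
    · refine Finset.mem_pi.2 fun q _ => Finset.mem_filter.2 ⟨?_, A, hA, hpA, rfl⟩
      exact Finset.mem_powerset.2 hitSet_subset_product
    · ext c
      simp only [Finset.mem_biUnion, Finset.mem_attach, true_and, Subtype.exists, mem_hitSet]
      constructor
      · rintro ⟨q, -, h, x, hx, hxc⟩
        exact ⟨h, x, hx.1, hxc⟩
      · rintro ⟨h, x, hx, hxc⟩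
        obtain ⟨q, hq, hxq⟩ := hQ p x
        exact ⟨q, hq, h, x, ⟨hx, hxq⟩, hxc⟩

theorem coe_iterate_indCon (hf : Continuous f) (j : ℕ) (A : SubCon T) :
    (((indCon f hf)^[j] A).1 : Set T) = f^[j] '' (A.1 : Set T) := by
  induction j with
  | zero => simp
  | succ j ih =>
    rw [Function.iterate_succ_apply', Function.iterate_succ', image_comp, ← ih]
    rfl

end Counting

section Entropy

open scoped ENNReal

theorem expGrowthSup_pow_le_zero (d : ℕ) :
    ExpGrowth.expGrowthSup (fun n : ℕ => ((n : ℝ≥0∞) + 1) ^ d) ≤ 0 := by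
  rw [ExpGrowth.expGrowthSup_le_iff]
  intro b hb
  induction b with
  | bot => exact absurd hb (by simp)
  | top =>
    filter_upwards [eventually_gt_atTop 0] with n hn
    rw [EReal.top_mul_of_pos (by exact_mod_cast hn)]
    simp
  | coe b =>
    have hb : 0 < b := by exact_mod_cast hb
    have h := ((isLittleO_pow_exp_pos_mul_atTop d hb).bound (Real.exp_pos (-b)))
    have ht : Tendsto (fun n : ℕ => (n : ℝ) + 1) atTop atTop :=
      tendsto_atTop_add_const_right _ _ tendsto_natCast_atTop_atTop
    filter_upwards [ht.eventually h] with n hn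
    have hn' : ((n : ℝ) + 1) ^ d ≤ Real.exp (b * n) := by
      rw [Real.norm_of_nonneg (by positivity), Real.norm_of_nonneg (Real.exp_pos _).le,
        ← Real.exp_add] at hn
      convert hn using 2
      ring
    have he : ((b : EReal) * (n : EReal)) = ((b * n : ℝ) : EReal) := by
      rw [EReal.coe_mul, EReal.coe_natCast]
    rw [he, EReal.exp_coe]
    calc ((n : ℝ≥0∞) + 1) ^ d = ENNReal.ofReal (((n : ℝ) + 1) ^ d) := by
          rw [ENNReal.ofReal_pow (by positivity), ENNReal.ofReal_add (by positivity) zero_le_one]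
          simp
      _ ≤ _ := ENNReal.ofReal_le_ofReal hn'

variable {T : Type*} [MetricSpace T]

theorem dist_subCon_le {A B : SubCon T} {r : ℝ} (hr : 0 ≤ r)
    (h1 : ∀ x ∈ (A.1 : Set T), ∃ y ∈ (B.1 : Set T), dist x y ≤ r)
    (h2 : ∀ x ∈ (B.1 : Set T), ∃ y ∈ (A.1 : Set T), dist x y ≤ r) : dist A B ≤ r := by
  rw [Subtype.dist_eq, NonemptyCompacts.dist_eq]
  exact hausdorffDist_le_of_mem_dist hr h1 h2

/-- A dynamical cover of the tree yields a dynamical cover of the hyperspace of subcontinua which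
is larger by a polynomial factor only. -/
theorem exists_isDynCoverOf_indCon (hT : IsTreeSpace T) {f : T → T} (hf : Continuous f)
    {ε : ℝ} (hε : 0 < ε) :
    ∃ C d : ℕ, ∀ (n : ℕ) (s : Finset T),
      Dynamics.IsDynCoverOf f univ {p : T × T | dist p.1 p.2 < ε} n s →
      ∃ t : Finset (SubCon T), t.card ≤ s.card * (C * (n + 1) ^ d) ∧
        Dynamics.IsDynCoverOf (indCon f hf) univ
          {p : SubCon T × SubCon T | dist p.1 p.2 < 4 * ε} n t := by
  classical
  have := hT.compact
  obtain ⟨Q, hQ⟩ := hT.exists_finset_endpoints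
  obtain ⟨P, hP⟩ := hT.exists_finset_mesh hε
  obtain ⟨D, hD⟩ : ∃ D : Finset T, ∀ x : T, ∃ c ∈ D, dist x c < ε := by
    obtain ⟨t, -, htf, ht⟩ := finite_cover_balls_of_compact (isCompact_univ (X := T)) hε
    refine ⟨htf.toFinset, fun x => ?_⟩
    simpa using ht (mem_univ x)
  refine ⟨(1 + P.card) * (D.card + 1) ^ Q.card, Q.card + 1, fun n s hs => ?_⟩
  choose G hGc hG using exists_finset_hitSet hT hQ D ε f n
  let R : SubCon T → T × ℕ × Finset (T × ℕ) → Prop := fun A c =>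
    (∃ x ∈ (A.1 : Set T), ∀ j < n, dist (f^[j] x) (f^[j] c.1) < ε) ∧
    (∀ j < c.2.1, j < n → ∀ x ∈ (A.1 : Set T), ∀ y ∈ (A.1 : Set T),
      dist (f^[j] x) (f^[j] y) ≤ ε) ∧
    (c.2.1 < n → hitSet D ε f n (f^[c.2.1] '' (A.1 : Set T)) = c.2.2)
  obtain ⟨t, htc, ht⟩ := Finset.exists_representatives
    (s ×ˢ Finset.range (n + 1) ×ˢ insert ∅ (P.biUnion G)) R (by
      intro A
      obtain ⟨x, hx⟩ := A.2.nonempty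
      obtain ⟨y, hy, hxy⟩ := hs (mem_univ x)
      have hxy' : ∀ j < n, dist (f^[j] x) (f^[j] y) < ε := Dynamics.mem_dynEntourage.1 hxy
      have hconn : ∀ j, IsPreconnected (f^[j] '' (A.1 : Set T)) := fun j =>
        A.2.isPreconnected.image _ (hf.iterate j).continuousOn
      have hsmall : ∀ j, Disjoint (f^[j] '' (A.1 : Set T)) P → ∀ x ∈ (A.1 : Set T),
          ∀ y ∈ (A.1 : Set T), dist (f^[j] x) (f^[j] y) ≤ ε := fun j hj x hx y hy =>
        hP _ (hconn j) hj _ (mem_image_of_mem _ hx) _ (mem_image_of_mem _ hy)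
      by_cases h : ∃ j, j < n ∧ ¬ Disjoint (f^[j] '' (A.1 : Set T)) P
      · obtain ⟨hk, hkP⟩ := Nat.find_spec h
        obtain ⟨p, hpA, hpP⟩ := not_disjoint_iff.1 hkP
        refine ⟨(y, Nat.find h, hitSet D ε f n (f^[Nat.find h] '' (A.1 : Set T))), ?_,
          ⟨x, hx, hxy'⟩, fun j hj hjn => hsmall j ?_, fun _ => rfl⟩
        · simp only [Finset.mem_product, Finset.mem_range, Finset.mem_insert, Finset.mem_biUnion]
          exact ⟨hy, hk.trans n.lt_succ_self, Or.inr ⟨p, hpP, hG p _ (hconn _) hpA⟩⟩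
        · by_contra hd
          exact Nat.find_min h hj ⟨hjn, hd⟩
      · push Not at h
        refine ⟨(y, n, ∅), ?_, ⟨x, hx, hxy'⟩, fun j _ hj => hsmall j (h j hj),
          fun h => absurd h (lt_irrefl n)⟩
        simp only [Finset.mem_product, Finset.mem_range, Finset.mem_insert, true_or, and_true]
        exact ⟨hy, n.lt_succ_self⟩)
  refine ⟨t, htc.trans ?_, fun A _ => ?_⟩
  · rw [Finset.card_product, Finset.card_product, Finset.card_range]
    refine Nat.mul_le_mul_left _ ?_
    have h1 : (insert ∅ (P.biUnion G)).card ≤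
        (1 + P.card) * ((D.card + 1) ^ Q.card * (n + 1) ^ Q.card) := by
      have hpow : (D.card * n + 1) ^ Q.card ≤ (D.card + 1) ^ Q.card * (n + 1) ^ Q.card := by
        rw [← mul_pow]
        exact Nat.pow_le_pow_left (by nlinarith) _
      have hpos : 1 ≤ (D.card + 1) ^ Q.card * (n + 1) ^ Q.card :=
        Nat.one_le_iff_ne_zero.2 (by positivity)
      have hbi := Finset.card_biUnion_le_card_mul P G _ fun p _ => (hGc p).trans hpow
      have := Finset.card_insert_le ∅ (P.biUnion G)
      linarith
    calc (n + 1) * (insert ∅ (P.biUnion G)).card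
        ≤ (n + 1) * ((1 + P.card) * ((D.card + 1) ^ Q.card * (n + 1) ^ Q.card)) :=
          Nat.mul_le_mul_left _ h1
      _ = _ := by ring
  · obtain ⟨B, hB, ⟨y, k, g⟩, hRA, hRB⟩ := ht A
    refine ⟨B, hB, Dynamics.mem_dynEntourage.2 fun j hj => ?_⟩
    have key : ∀ A B : SubCon T, R A (y, k, g) → R B (y, k, g) →
        ∀ x ∈ (((indCon f hf)^[j] A).1 : Set T), ∃ z ∈ (((indCon f hf)^[j] B).1 : Set T),
          dist x z ≤ 3 * ε := by
      rintro A B ⟨⟨a, ha, hay⟩, hA, hAg⟩ ⟨⟨b, hb, hby⟩, -, hBg⟩ x hx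
      rw [coe_iterate_indCon] at hx ⊢
      obtain ⟨x, hx, rfl⟩ := hx
      rcases lt_or_ge j k with hjk | hkj
      · refine ⟨_, mem_image_of_mem _ hb, ?_⟩
        have h1 := hA j hjk hj x hx a ha
        have h2 := hay j hj
        have h3 := hby j hj
        have h4 := dist_triangle4_right (f^[j] x) (f^[j] b) (f^[j] a) (f^[j] y)
        linarith
      · have hkn := hkj.trans_lt hj
        obtain ⟨_, ⟨z, hz, rfl⟩, hxz⟩ := exists_dist_lt_of_hitSet_eq hD
          ((hAg hkn).trans (hBg hkn).symm) (Nat.sub_lt_of_lt hj : j - k < n)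
          (mem_image_of_mem _ hx)
        refine ⟨_, mem_image_of_mem _ hz, ?_⟩
        rw [← Function.iterate_add_apply, ← Function.iterate_add_apply,
          Nat.sub_add_cancel hkj] at hxz
        linarith
    exact (dist_subCon_le (by positivity) (key A B hRA hRB) (key B A hRB hRA)).trans_lt
      (by linarith)

theorem coverEntropyEntourage_indCon_le (hT : IsTreeSpace T) {f : T → T} (hf : Continuous f)
    {ε : ℝ} (hε : 0 < ε) :
    Dynamics.coverEntropyEntourage (indCon f hf) univ
        {p : SubCon T × SubCon T | dist p.1 p.2 < 4 * ε} ≤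
      Dynamics.coverEntropyEntourage f univ {p : T × T | dist p.1 p.2 < ε} := by
  have := hT.compact
  have hne := hT.conn.toNonempty
  obtain ⟨C, d, h⟩ := exists_isDynCoverOf_indCon hT hf hε
  have hle : ∀ n : ℕ, ((Dynamics.coverMincard (indCon f hf) univ
      {p : SubCon T × SubCon T | dist p.1 p.2 < 4 * ε} n : ℕ∞) : ℝ≥0∞) ≤
      C * (((fun n : ℕ => ((Dynamics.coverMincard f univ
        {p : T × T | dist p.1 p.2 < ε} n : ℕ∞) : ℝ≥0∞)) *
        fun n : ℕ => ((n : ℝ≥0∞) + 1) ^ d) n) := by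
    intro n
    obtain ⟨s, hs, hsc⟩ := (Dynamics.coverMincard_finite_iff f univ _ n).1
      (Dynamics.coverMincard_finite_of_isCompact_invariant isCompact_univ (mapsTo_univ f univ)
        (dist_mem_uniformity hε) n)
    obtain ⟨t, htc, ht⟩ := h n s hs
    rw [Pi.mul_apply, ← hsc]
    refine (ENat.toENNReal_mono ht.coverMincard_le_card).trans ?_
    simp only [ENat.toENNReal_coe]
    calc (t.card : ℝ≥0∞) ≤ ((s.card * (C * (n + 1) ^ d) : ℕ) : ℝ≥0∞) := by exact_mod_cast htc
      _ = _ := by push_cast; ring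
  have h0 := Dynamics.coverEntropyEntourage_nonneg f (univ_nonempty (α := T))
    {p : T × T | dist p.1 p.2 < ε}
  have hpoly := expGrowthSup_pow_le_zero d
  refine (ExpGrowth.expGrowthSup_le_of_eventually_le (ENNReal.natCast_ne_top C)
    (Eventually.of_forall hle)).trans ?_
  refine (ExpGrowth.expGrowthSup_mul_le (.inl ?_) (.inl ?_)).trans ?_
  · exact (EReal.bot_lt_zero.trans_le h0).ne'
  · exact (Dynamics.coverEntropyEntourage_finite_of_isCompact_invariant isCompact_univ
      (mapsTo_univ f univ) (dist_mem_uniformity hε)).ne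
  · exact (add_le_add_right hpoly _).trans_eq (add_zero _)

theorem isometry_singleton_subCon :
    Isometry fun x : T => (⟨{x}, by simpa using isConnected_singleton⟩ : SubCon T) :=
  NonemptyCompacts.isometry_singleton

end Entropy

/-- the induced map on the hyperspace of subcontinua of a tree
has the same topological entropy as the base map. -/
theorem entropy_indCon_eq {T : Type*} [MetricSpace T]
    (hT : IsTreeSpace T) (f : T → T) (hf : Continuous f) :
    entropy (indCon f hf) = entropy f := by
  unfold entropy
  apply le_antisymm
  · rw [Dynamics.coverEntropy_eq_iSup_basis uniformity_basis_dist]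
    refine iSup₂_le fun ε hε => ?_
    have := coverEntropyEntourage_indCon_le hT hf (div_pos hε four_pos)
    rw [mul_div_cancel₀ ε (four_ne_zero' ℝ)] at this
    exact this.trans (Dynamics.coverEntropyEntourage_le_coverEntropy f univ
      (dist_mem_uniformity (div_pos hε four_pos)))
  · have hι := isometry_singleton_subCon (T := T)
    have hsemi : Function.Semiconj
        (fun x : T => (⟨{x}, by simpa using isConnected_singleton⟩ : SubCon T)) f
        (indCon f hf) := fun x => by
      apply Subtype.ext
      apply SetLike.coe_injective
      change ({f x} : Set T) = f '' {x}
      simp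
    have h := Dynamics.coverEntropy_image_of_comap inferInstance hsemi univ
    rw [hι.isUniformInducing.comap_uniformSpace] at h
    rw [← h]
    exact Dynamics.coverEntropy_monotone _ (subset_univ _)
end
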